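/- arXiv:cs/0703029 — 2 statements merged into one kernel-verified Lean document; each statement's English description precedes it below -/
import Mathlib

section
/- Let C ∈ ℝ^{m×n} with m ≤ n, and let A ∈ ℝ^{(m+n)×(m+n)} be the skew-symmetric block matrix A = [[0, C], [−Cᵀ, 0]]. Let μ_1 ≥ … ≥ μ_m ≥ 0 be the eigenvalues of the positive semidefinite matrix C Cᵀ (the squares of the singular values of C). Then for every t ≥ 0, det(√t I_{m+n} + A) = t^{(n−m)/2} ∏_{i=1}^m (t + μ_i). -/
/-!
Put `x = √t`, `B = C` and `D = Cᵀ`. Multiplying `x I + [[0, B], [-D, 0]]` on the right by the block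
triangular matrix `[[x I, 0], [D, I]]` gives the block triangular matrix
`[[x² I + B D, B], [0, x I]]`, so that
`x ^ m * det (x I + [[0, B], [-D, 0]]) = x ^ n * det (x² I + B D)` over every commutative ring. For
`m ≤ n` the factor `x ^ m` cancels even when `x = 0`, because it does so when `x` is the variable
of a polynomial ring. The last determinant is, up to sign, the characteristic polynomial of `B D`
at `-x²`, and so factors over the eigenvalues.
-/

open Matrix

section CommRing

variable {R m n : Type*} [CommRing R] [Fintype m] [Fintype n] [DecidableEq m] [DecidableEq n]

lemma pow_card_mul_det_smul_one_add_fromBlocks_neg (x : R) (B : Matrix m n R)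
    (D : Matrix n m R) :
    x ^ Fintype.card m * (x • 1 + fromBlocks 0 B (-D) 0).det =
      x ^ Fintype.card n * (x ^ 2 • 1 + B * D).det := by
  have block_mul : (x • 1 + fromBlocks 0 B (-D) 0) * fromBlocks (x • 1) 0 D 1 =
      fromBlocks (x ^ 2 • 1 + B * D) B 0 (x • 1) := by
    rw [← fromBlocks_one, fromBlocks_smul, fromBlocks_add, fromBlocks_multiply]
    simp [smul_smul, pow_two]
  have det_block_mul := congrArg det block_mul
  simp only [det_mul, det_fromBlocks_zero₁₂, det_fromBlocks_zero₂₁, det_smul, det_one,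
    mul_one] at det_block_mul
  rw [mul_comm, det_block_mul, mul_comm]

lemma det_smul_one_add_fromBlocks_neg_eq_pow_mul (hmn : Fintype.card m ≤ Fintype.card n) (x : R)
    (B : Matrix m n R) (D : Matrix n m R) :
    (x • 1 + fromBlocks 0 B (-D) 0).det =
      x ^ (Fintype.card n - Fintype.card m) * (x ^ 2 • 1 + B * D).det := by
  open Polynomial in
  have generic : ((X : R[X]) • 1 + fromBlocks 0 (B.map C) (-D.map C) 0).det =
      X ^ (Fintype.card n - Fintype.card m) *
        ((X : R[X]) ^ 2 • 1 + (B * D).map C).det := by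
    rw [← (isRegular_X_pow (Fintype.card m)).left.eq_iff,
      pow_card_mul_det_smul_one_add_fromBlocks_neg, ← Matrix.map_mul, ← mul_assoc, ← pow_add,
      Nat.add_sub_cancel' hmn]
  have evaluated := congrArg (Polynomial.evalRingHom x) generic
  simp only [map_mul, map_pow, RingHom.map_det, RingHom.mapMatrix_apply] at evaluated
  simpa [-Matrix.map_mul, Matrix.map_add, Matrix.map_neg, Matrix.map_smul', fromBlocks_map,
    Function.comp_def] using evaluated

end CommRing

lemma det_smul_one_add_fromBlocks_neg_eq_zpow_mul {K m n : Type*} [Field K] [Fintype m] [Fintype n]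
    [DecidableEq m] [DecidableEq n] {x : K} (hx : x = 0 → Fintype.card m ≤ Fintype.card n)
    (B : Matrix m n K) (D : Matrix n m K) :
    (x • 1 + fromBlocks 0 B (-D) 0).det =
      x ^ ((Fintype.card n : ℤ) - Fintype.card m) * (x ^ 2 • 1 + B * D).det := by
  by_cases h : x = 0
  · rw [det_smul_one_add_fromBlocks_neg_eq_pow_mul (hx h), ← Nat.cast_sub (hx h), zpow_natCast]
  · rw [zpow_sub₀ h, zpow_natCast, zpow_natCast, div_mul_eq_mul_div,
      eq_div_iff (pow_ne_zero _ h), mul_comm, pow_card_mul_det_smul_one_add_fromBlocks_neg]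

lemma sqrt_zpow_eq_rpow_div_two {t : ℝ} (ht : 0 ≤ t) (k : ℤ) : √t ^ k = t ^ ((k : ℝ) / 2) := by
  rw [Real.rpow_div_two_eq_sqrt _ ht, Real.rpow_intCast]

section RCLike

variable {𝕜 m n : Type*} [RCLike 𝕜] [Fintype m] [Fintype n] [DecidableEq m] [DecidableEq n]

lemma det_smul_one_add_eq_prod_eigenvalues {A : Matrix n n 𝕜} (hA : A.IsHermitian) (x : 𝕜) :
    (x • 1 + A).det = ∏ i, (x + hA.eigenvalues i) := by
  have charpoly_eval : (scalar n (-x) - A).det = ∏ i, (-x - hA.eigenvalues i) := by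
    rw [← eval_charpoly, hA.charpoly_eq, Polynomial.eval_prod]
    simp
  have neg_eq : x • 1 + A = -(scalar n (-x) - A) := by
    rw [scalar_apply, ← smul_one_eq_diagonal, neg_smul]
    abel
  rw [neg_eq, det_neg, charpoly_eval, Fintype.card, ← Finset.prod_const, ← Finset.prod_mul_distrib]
  exact Finset.prod_congr rfl fun i _ => by ring

theorem det_sqrt_add_bipartite_block_general (B : Matrix m n 𝕜) (D : Matrix n m 𝕜)
    (hBD : (B * D).IsHermitian) {t : ℝ} (ht : 0 ≤ t)
    (hmn : t = 0 → Fintype.card m ≤ Fintype.card n) :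
    ((√t : 𝕜) • 1 + fromBlocks 0 B (-D) 0).det =
      ((t ^ (((Fintype.card n : ℝ) - Fintype.card m) / 2) *
        ∏ i, (t + hBD.eigenvalues i) : ℝ) : 𝕜) := by
  have sqrt_eq_zero : (√t : 𝕜) = 0 → t = 0 := by
    simp [Real.sqrt_eq_zero ht]
  have sqrt_sq : (√t : 𝕜) ^ 2 = t := by
    rw [← RCLike.ofReal_pow, Real.sq_sqrt ht]
  rw [det_smul_one_add_fromBlocks_neg_eq_zpow_mul (hmn ∘ sqrt_eq_zero), sqrt_sq,
    det_smul_one_add_eq_prod_eigenvalues hBD, ← RCLike.ofReal_zpow, sqrt_zpow_eq_rpow_div_two ht]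
  simp

end RCLike

/-- for `C ∈ ℝ^{m×n}` with `m ≤ n` and the skew-symmetric block
matrix `A = [[0, C], [-Cᵀ, 0]]`, with `μ_1, …, μ_m` the eigenvalues of `C Cᵀ`,
`det(√t I_{m+n} + A) = t^{(n-m)/2} ∏_i (t + μ_i)` for every `t ≥ 0`. -/
theorem det_sqrt_add_bipartite_block
    {m n : ℕ} (hmn : m ≤ n) (C : Matrix (Fin m) (Fin n) ℝ)
    (hH : (C * Cᵀ).IsHermitian) (t : ℝ) (ht : 0 ≤ t) :
    (Real.sqrt t • (1 : Matrix (Fin m ⊕ Fin n) (Fin m ⊕ Fin n) ℝ) +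
        Matrix.fromBlocks 0 C (-Cᵀ) 0).det =
      t ^ (((n : ℝ) - (m : ℝ)) / 2) * ∏ i : Fin m, (t + hH.eigenvalues i) := by
  simpa using det_sqrt_add_bipartite_block_general C Cᵀ hH ht (by simpa using fun _ => hmn)
end

section
/- Fix 0 < b ≤ a and t > 0. For m ≤ n and a weight function ω : {1,…,m}×{1,…,n} → [b², a²], let C(ω) := (√(ω(i,j))) ∈ ℝ^{m×n}, let A(ω) := [[0, C(ω)], [−C(ω)ᵀ, 0]] be the associated skew-symmetric matrix of size N = m+n, let Φ(t, A(ω)) be its weighted matching polynomial (times √t if N is odd), and let log Φ̃(t, A(ω)) := E log det(√t I_N + Y_{A(ω)}) with Y_{A(ω)} built from i.i.d. standard Gaussians. Then lim_{n→∞} sup_{m ≤ n} sup_{ω : {1,…,m}×{1,…,n} → [b²,a²]} (1/(m+n)) ( log Φ(t, A(ω)) − log Φ̃(t, A(ω)) ) = 0. -/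
/-!
Write `N = m + n`, `f_s = log det (s + Y)` and `G = (s + Y)⁻¹`, and let `T` be the part of `tr G`
carried by the side of size `m` of the bipartition.

By the Godsil–Gutman identity `Φ(t, A) = E det (√t + Y) = E exp f_√t`, so the claim is that
`log E exp f_√t - E f_√t = o(N)`, uniformly in the weights. Gaussian concentration does not give
this at the shift `√t`: the bound for the squared gradient of `f_s` is `2 a² N / s²`, of order `N`
for fixed `s`. At the larger shift `s' = √(δ n)` it does give `log E exp f_s' ≤ E f_s' + O(1 / δ)`.

The bipartite structure allows passing between the two shifts. The signature matrix of the
bipartition anticommutes with `Y`, hence the partial traces of `G` over the two sides differ by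
exactly `(n - m) / s`, and `f_s - (n - m) log s` has derivative `2 T ≥ 0` in `s`.
* It increases with `s`, which bounds `E exp f_√t` by a multiple of `E exp f_s'`.
* On the average it increases slowly: Gaussian integration by parts in the diagonal of
  `(s + Y) G = 1` gives `b² (E T)² ≤ N (1 + a² / s²)`, so that `E T = O(√N)` and the return from
  `s'` to `√t` costs at most `O(√N) √(δ n) = O(√δ) N`.

Altogether the gap divided by `N` is `O(1 / (δ n)) + O(√δ)`.
-/

open MeasureTheory ProbabilityTheory Matrix

/-- Total weighted `k`-matching of the weighted graph encoded by the
skew-symmetric matrix `A`. -/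
noncomputable def phiW {N : ℕ} (A : Matrix (Fin N) (Fin N) ℝ) (k : ℕ) : ℝ :=
  ∑ M ∈ Finset.univ.filter
      (fun M : Finset (Fin N × Fin N) =>
        ((∀ p ∈ M, p.1 < p.2) ∧
          ∀ p ∈ M, ∀ q ∈ M, p ≠ q →
            p.1 ≠ q.1 ∧ p.1 ≠ q.2 ∧ p.2 ≠ q.1 ∧ p.2 ≠ q.2) ∧ M.card = k),
    ∏ p ∈ M, (A p.1 p.2) ^ 2

/-- The weighted matching polynomial `Φ(t, A)`. -/
noncomputable def PhiW {N : ℕ} (A : Matrix (Fin N) (Fin N) ℝ) (t : ℝ) : ℝ :=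
  ∑ k ∈ Finset.range (N / 2 + 1), phiW A k * t ^ (N / 2 - k)

/-- `Φ(t,A)`, multiplied by `√t` when `N` is odd. -/
noncomputable def PhiFull {N : ℕ} (A : Matrix (Fin N) (Fin N) ℝ) (t : ℝ) : ℝ :=
  (if Even N then 1 else Real.sqrt t) * PhiW A t

/-- Index type of the strictly upper-triangular positions. -/
abbrev PairIdx (N : ℕ) := {p : Fin N × Fin N // p.1 < p.2}

/-- The canonical product of standard Gaussian measures, one for each edge slot. -/
noncomputable def gaussPi (N : ℕ) : Measure (PairIdx N → ℝ) :=
  Measure.pi fun _ => gaussianReal 0 1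

/-- The sample `Y_A(ξ)` of the random skew-symmetric matrix `Y_A`. -/
noncomputable def sampleY {N : ℕ} (A : Matrix (Fin N) (Fin N) ℝ)
    (ξ : PairIdx N → ℝ) : Matrix (Fin N) (Fin N) ℝ :=
  Matrix.of fun i j =>
    if h : i < j then A i j * ξ ⟨(i, j), h⟩
    else if h : j < i then A i j * ξ ⟨(j, i), h⟩
    else 0

/-- `log Φ̃(t, A) = E log det(√t I_N + Y_A)` for i.i.d. standard Gaussian entries. -/
noncomputable def logPhiTilde {N : ℕ} (t : ℝ) (A : Matrix (Fin N) (Fin N) ℝ) : ℝ :=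
  ∫ ξ, Real.log ((Real.sqrt t • (1 : Matrix (Fin N) (Fin N) ℝ) + sampleY A ξ).det) ∂(gaussPi N)

/-- The constant `C₁ = -(1/√(2π)) ∫ log(x²) e^{-x²/2} dx`. -/
noncomputable def C1 : ℝ :=
  -(Real.sqrt (2 * Real.pi))⁻¹ * ∫ x : ℝ, Real.log (x ^ 2) * Real.exp (-x ^ 2 / 2)

/-- The skew-symmetric matrix of the weighted complete bipartite graph `K_{m,n,ω}`,
`A(ω) = [[0, C(ω)], [-C(ω)ᵀ, 0]]` with `C(ω)_{ij} = √(ω(i,j))`, reindexed to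
`Fin (m + n)`. -/
noncomputable def bipartiteSkew {m n : ℕ} (w : Fin m → Fin n → ℝ) :
    Matrix (Fin (m + n)) (Fin (m + n)) ℝ :=
  Matrix.reindex finSumFinEquiv finSumFinEquiv
    (Matrix.fromBlocks 0 (Matrix.of fun i j => Real.sqrt (w i j))
      (-(Matrix.of fun i j => Real.sqrt (w i j))ᵀ) 0)

/-! ### Resolvent of a skew-symmetric matrix -/

section SkewResolvent
variable {n : Type*} [Fintype n]

lemma dotProduct_mulVec_self_of_skew {S : Matrix n n ℝ} (hS : Sᵀ = -S) (v : n → ℝ) :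
    v ⬝ᵥ (S *ᵥ v) = 0 := by
  refine self_eq_neg.1 ?_
  rw [← dotProduct_neg, ← neg_mulVec, ← hS, mulVec_transpose, dotProduct_comm v (v ᵥ* S),
    dotProduct_mulVec]

variable [DecidableEq n]

lemma isUnit_det_smul_one_add {S : Matrix n n ℝ} (hS : Sᵀ = -S) {s : ℝ} (hs : 0 < s) :
    IsUnit (s • (1 : Matrix n n ℝ) + S).det := by
  rw [isUnit_iff_ne_zero]
  intro h
  obtain ⟨v, hv, hMv⟩ := exists_mulVec_eq_zero_iff.2 h
  have hform : s * (v ⬝ᵥ v) = v ⬝ᵥ ((s • (1 : Matrix n n ℝ) + S) *ᵥ v) := by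
    rw [add_mulVec, dotProduct_add, dotProduct_mulVec_self_of_skew hS, smul_mulVec, one_mulVec,
      dotProduct_smul, smul_eq_mul, add_zero]
  rw [hMv, dotProduct_zero, mul_eq_zero, or_iff_right hs.ne'] at hform
  exact hv (dotProduct_self_eq_zero.1 hform)

/-- The inverse of `s + S`, i.e. the resolvent of `-S` at `s`. -/
noncomputable def shiftInv (S : Matrix n n ℝ) (s : ℝ) : Matrix n n ℝ :=
  (s • (1 : Matrix n n ℝ) + S)⁻¹

variable {S : Matrix n n ℝ} {s : ℝ}

lemma smul_shiftInv_add_mul (hS : Sᵀ = -S) (hs : 0 < s) :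
    s • shiftInv S s + S * shiftInv S s = 1 := by
  rw [← mul_nonsing_inv _ (isUnit_det_smul_one_add hS hs), ← shiftInv, Matrix.add_mul,
    Matrix.smul_mul, Matrix.one_mul]

lemma smul_shiftInv_add_mul' (hS : Sᵀ = -S) (hs : 0 < s) :
    s • shiftInv S s + shiftInv S s * S = 1 := by
  rw [← nonsing_inv_mul _ (isUnit_det_smul_one_add hS hs), ← shiftInv, Matrix.mul_add,
    Matrix.mul_smul, Matrix.mul_one]

lemma shiftInv_add_transpose (hS : Sᵀ = -S) (hs : 0 < s) :
    shiftInv S s + (shiftInv S s)ᵀ = (2 * s) • ((shiftInv S s)ᵀ * shiftInv S s) := by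
  have hright := smul_shiftInv_add_mul hS hs
  have hleft : s • (shiftInv S s)ᵀ - (shiftInv S s)ᵀ * S = 1 := by
    simpa only [transpose_add, transpose_smul, transpose_mul, transpose_one, hS, Matrix.mul_neg,
      ← sub_eq_add_neg] using congrArg transpose hright
  set G := shiftInv S s
  calc G + Gᵀ = (s • Gᵀ - Gᵀ * S) * G + Gᵀ * (s • G + S * G) := by
        rw [hright, hleft, Matrix.one_mul, Matrix.mul_one]
    _ = (2 * s) • (Gᵀ * G) := by
        rw [Matrix.sub_mul, Matrix.mul_add, Matrix.smul_mul, Matrix.mul_smul, Matrix.mul_assoc]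
        module

lemma shiftInv_apply_self (hS : Sᵀ = -S) (hs : 0 < s) (i : n) :
    shiftInv S s i i = s * ∑ j, shiftInv S s j i ^ 2 := by
  have h := congrFun₂ (shiftInv_add_transpose hS hs) i i
  simp only [Matrix.add_apply, transpose_apply, Matrix.smul_apply, mul_apply, smul_eq_mul,
    ← sq] at h
  linarith

lemma shiftInv_apply_self_nonneg (hS : Sᵀ = -S) (hs : 0 < s) (i : n) :
    0 ≤ shiftInv S s i i := by
  rw [shiftInv_apply_self hS hs]
  positivity

lemma shiftInv_apply_sq_le_sum (S : Matrix n n ℝ) (s : ℝ) (j i : n) :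
    shiftInv S s j i ^ 2 ≤ ∑ k, shiftInv S s k i ^ 2 :=
  Finset.single_le_sum (f := fun k => shiftInv S s k i ^ 2) (fun _ _ => sq_nonneg _)
    (Finset.mem_univ j)

lemma shiftInv_apply_self_le (hS : Sᵀ = -S) (hs : 0 < s) (i : n) :
    shiftInv S s i i ≤ 1 / s := by
  have hsq : s * shiftInv S s i i ^ 2 ≤ shiftInv S s i i := by
    conv_rhs => rw [shiftInv_apply_self hS hs]
    exact mul_le_mul_of_nonneg_left (shiftInv_apply_sq_le_sum S s i i) hs.le
  rcases (shiftInv_apply_self_nonneg hS hs i).eq_or_lt with h | h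
  · rw [← h]
    positivity
  · rw [le_div_iff₀ hs]
    nlinarith

lemma sum_shiftInv_col_sq_le (hS : Sᵀ = -S) (hs : 0 < s) (i : n) :
    ∑ j, shiftInv S s j i ^ 2 ≤ 1 / s ^ 2 := by
  have h := shiftInv_apply_self_le hS hs i
  rw [shiftInv_apply_self hS hs, le_div_iff₀ hs] at h
  rw [le_div_iff₀ (by positivity)]
  linarith

lemma abs_shiftInv_apply_le (hS : Sᵀ = -S) (hs : 0 < s) (j i : n) :
    |shiftInv S s j i| ≤ 1 / s := by
  refine abs_le_of_sq_le_sq ?_ (by positivity)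
  rw [div_pow, one_pow]
  exact (shiftInv_apply_sq_le_sum S s j i).trans (sum_shiftInv_col_sq_le hS hs i)

lemma sum_sum_shiftInv_sq_le (hS : Sᵀ = -S) (hs : 0 < s) :
    ∑ i, ∑ j, shiftInv S s j i ^ 2 ≤ Fintype.card n / s ^ 2 := by
  calc _ ≤ ∑ _i : n, 1 / s ^ 2 := Finset.sum_le_sum fun i _ => sum_shiftInv_col_sq_le hS hs i
    _ = _ := by rw [Finset.sum_const, Finset.card_univ, nsmul_eq_mul, mul_one_div]

lemma mul_trace_mul_shiftInv_of_anticommute (hS : Sᵀ = -S) (hs : 0 < s) {J : Matrix n n ℝ}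
    (hJ : J * S = -(S * J)) : s * (J * shiftInv S s).trace = J.trace := by
  have hcomm : S * shiftInv S s = shiftInv S s * S := add_left_cancel
    ((smul_shiftInv_add_mul hS hs).trans (smul_shiftInv_add_mul' hS hs).symm)
  have hzero : (J * (S * shiftInv S s)).trace = 0 := by
    refine self_eq_neg.1 ?_
    conv_lhs => rw [← Matrix.mul_assoc, hJ, Matrix.neg_mul, trace_neg, Matrix.mul_assoc,
      trace_mul_comm, Matrix.mul_assoc, ← hcomm]
  have h := congrArg (fun X => (J * X).trace) (smul_shiftInv_add_mul hS hs)
  simpa only [Matrix.mul_add, trace_add, Matrix.mul_smul, trace_smul, hzero, Matrix.mul_one,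
    smul_eq_mul, add_zero] using h

end SkewResolvent

section MatrixCalculus
open scoped Matrix.Norms.Operator
variable {n : Type*} [Fintype n] [DecidableEq n]

lemma contDiff_det {k : WithTop ℕ∞} : ContDiff ℝ k fun M : Matrix n n ℝ => M.det := by
  simp only [det_apply']
  exact ContDiff.sum fun σ _ => contDiff_const.mul <| contDiff_prod fun i _ =>
    (entryLinearMap ℝ ℝ (σ i) i).toContinuousLinearMap.contDiff

lemma hasDerivAt_det_one_add_smul (X : Matrix n n ℝ) :
    HasDerivAt (fun r : ℝ => (1 + r • X).det) X.trace 0 := by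
  rw [funext fun r : ℝ => det_one_add_smul r X]
  set p := (1 + (Polynomial.X : Polynomial ℝ) • X.map Polynomial.C).det.divX.divX
  have h := (((hasDerivAt_id' (0 : ℝ)).const_mul X.trace).const_add 1).fun_add
    ((p.hasDerivAt 0).fun_mul ((hasDerivAt_id' (0 : ℝ)).fun_pow 2))
  simpa using h

/-- The linear functional `H ↦ tr (B H)`. -/
noncomputable def traceMulLeft (B : Matrix n n ℝ) : Matrix n n ℝ →L[ℝ] ℝ :=
  (traceLinearMap n ℝ ℝ ∘ₗ LinearMap.mulLeft ℝ B).toContinuousLinearMap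

lemma traceMulLeft_apply (B H : Matrix n n ℝ) : traceMulLeft B H = (B * H).trace := rfl

/-- **Jacobi's formula** at an invertible matrix. -/
lemma hasFDerivAt_det {M : Matrix n n ℝ} (hM : IsUnit M.det) :
    HasFDerivAt (fun X : Matrix n n ℝ => X.det) (M.det • traceMulLeft M⁻¹) M := by
  have hdiff : DifferentiableAt ℝ (fun X : Matrix n n ℝ => X.det) M :=
    contDiff_det.differentiable one_ne_zero M
  convert hdiff.hasFDerivAt using 1
  ext H
  have hline : HasDerivAt (fun r : ℝ => M + r • H) ((1 : ℝ) • H) 0 :=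
    ((hasDerivAt_id (0 : ℝ)).smul_const H).const_add M
  rw [one_smul] at hline
  have hfactor : (fun r : ℝ => (M + r • H).det) = fun r => M.det * (1 + r • (M⁻¹ * H)).det := by
    funext r
    rw [← det_mul, Matrix.mul_add, Matrix.mul_one, Matrix.mul_smul,
      mul_nonsing_inv_cancel_left _ _ hM]
  have hdet : HasDerivAt (fun r : ℝ => (M + r • H).det) (M.det * (M⁻¹ * H).trace) 0 := by
    rw [hfactor]
    exact (hasDerivAt_det_one_add_smul _).const_mul _
  have hchain := hdiff.hasFDerivAt.comp_hasDerivAt_of_eq (0 : ℝ) hline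
    (by rw [zero_smul, add_zero])
  exact hdet.unique hchain

lemma hasFDerivAt_log_det {M : Matrix n n ℝ} (hM : IsUnit M.det) :
    HasFDerivAt (fun X : Matrix n n ℝ => Real.log X.det) (traceMulLeft M⁻¹) M := by
  have h : HasFDerivAt (fun X : Matrix n n ℝ => Real.log X.det)
      (M.det⁻¹ • M.det • traceMulLeft M⁻¹) M := (hasFDerivAt_det hM).log hM.ne_zero
  rwa [smul_smul, inv_mul_cancel₀ hM.ne_zero, one_smul] at h

lemma hasDerivAt_log_det_smul_one_add {S : Matrix n n ℝ} {s : ℝ}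
    (hs : IsUnit (s • (1 : Matrix n n ℝ) + S).det) :
    HasDerivAt (fun r : ℝ => Real.log (r • (1 : Matrix n n ℝ) + S).det)
      (shiftInv S s).trace s := by
  have hline : HasDerivAt (fun r : ℝ => r • (1 : Matrix n n ℝ) + S) ((1 : ℝ) • 1) s :=
    ((hasDerivAt_id s).smul_const _).add_const S
  refine ((hasFDerivAt_log_det hs).comp_hasDerivAt s hline).congr_deriv ?_
  exact (traceMulLeft_apply _ _).trans (by rw [one_smul, Matrix.mul_one, shiftInv])

lemma hasDerivAt_matrix_inv {M : ℝ → Matrix n n ℝ} {M' : Matrix n n ℝ} {x : ℝ}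
    (hM : HasDerivAt M M' x) (hx : IsUnit (M x).det) :
    HasDerivAt (fun y => (M y)⁻¹) (-((M x)⁻¹ * M' * (M x)⁻¹)) x := by
  obtain ⟨u, hu⟩ := (isUnit_iff_isUnit_det _).2 hx
  have h := (hasFDerivAt_ringInverse (𝕜 := ℝ) u).comp_hasDerivAt_of_eq x hM hu
  rw [← hu, ← coe_units_inv, funext fun y => nonsing_inv_eq_ringInverse (M y)]
  exact h

end MatrixCalculus

/-! ### Gaussian integration by parts -/

section GaussianIntegrationByParts

lemma integrable_gaussianReal_iff {μ : ℝ} {v : NNReal} (hv : v ≠ 0) {f : ℝ → ℝ} :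
    Integrable f (gaussianReal μ v) ↔ Integrable fun x => gaussianPDFReal μ v x * f x := by
  rw [gaussianReal_of_var_ne_zero μ hv, integrable_withDensity_iff_integrable_smul'
    (measurable_gaussianPDF μ v) (Filter.Eventually.of_forall fun _ => gaussianPDF_lt_top)]
  simp only [gaussianPDF, ENNReal.toReal_ofReal (gaussianPDFReal_nonneg μ v _), smul_eq_mul]

lemma hasDerivAt_gaussianPDFReal (μ : ℝ) (v : NNReal) (x : ℝ) :
    HasDerivAt (gaussianPDFReal μ v) (-((x - μ) / v * gaussianPDFReal μ v x)) x := by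
  have hexponent : HasDerivAt (fun y : ℝ => -(y - μ) ^ 2 / (2 * v)) (-((x - μ) / v)) x := by
    have hsq := ((hasDerivAt_id' x).sub_const μ).fun_pow 2
    refine (hsq.fun_neg.div_const (2 * v : ℝ)).congr_deriv ?_
    push_cast
    field_simp
  rw [gaussianPDFReal_def]
  exact (hexponent.exp.const_mul (√(2 * Real.pi * v))⁻¹).congr_deriv (by ring)

/-- **Stein's lemma**. -/
lemma integral_sub_mul_gaussianReal {μ : ℝ} {v : NNReal} {F F' : ℝ → ℝ}
    (hF : ∀ x, HasDerivAt F (F' x) x) (hint : Integrable F (gaussianReal μ v))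
    (hint_mul : Integrable (fun x => (x - μ) * F x) (gaussianReal μ v))
    (hint' : Integrable F' (gaussianReal μ v)) :
    ∫ x, (x - μ) * F x ∂gaussianReal μ v = v * ∫ x, F' x ∂gaussianReal μ v := by
  rcases eq_or_ne v 0 with rfl | hv
  · simp
  rw [integrable_gaussianReal_iff hv] at hint hint_mul hint'
  have hparts := integral_mul_deriv_eq_deriv_mul_of_integrable
    (fun x _ => hF x) (fun x _ => hasDerivAt_gaussianPDFReal μ v x)
    ((hint_mul.const_mul (-(v : ℝ)⁻¹)).congr (.of_forall fun x => by simp; ring))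
    (hint'.congr (.of_forall fun x => mul_comm _ _))
    (hint.congr (.of_forall fun x => mul_comm _ _))
  have hv' : (v : ℝ) ≠ 0 := mod_cast hv
  rw [integral_gaussianReal_eq_integral_smul hv, integral_gaussianReal_eq_integral_smul hv]
  simp only [smul_eq_mul]
  rw [← neg_eq_iff_eq_neg, ← integral_neg] at hparts
  simp only [mul_comm (gaussianPDFReal μ v _)]
  rw [← hparts, ← integral_const_mul]
  congr 1 with x
  field_simp

variable {ι : Type*} [Fintype ι] [DecidableEq ι]

lemma measurePreserving_update {X : ι → Type*} [∀ i, MeasurableSpace (X i)]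
    (μ : ∀ i, Measure (X i)) [∀ i, IsProbabilityMeasure (μ i)] (p : ι) :
    MeasurePreserving (fun z : (∀ i, X i) × X p => Function.update z.1 p z.2)
      ((Measure.pi μ).prod (μ p)) (Measure.pi μ) := by
  have hmeas : Measurable fun z : (∀ i, X i) × X p => Function.update z.1 p z.2 :=
    measurable_update'
  refine ⟨hmeas, (Measure.pi_eq fun s hs => ?_).symm⟩
  have hpre : (fun z : (∀ i, X i) × X p => Function.update z.1 p z.2) ⁻¹' (Set.univ.pi s) =
      Set.univ.pi (Function.update s p Set.univ) ×ˢ s p := by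
    ext z
    simp only [Set.mem_preimage, Set.mem_univ_pi, Set.mem_prod]
    rw [Function.forall_update_iff z.1 fun i y => y ∈ s i,
      Function.forall_update_iff s fun i t => z.1 i ∈ t]
    simp [and_comm]
  rw [Measure.map_apply hmeas (.univ_pi hs), hpre, Measure.prod_prod, Measure.pi_pi,
    ← Finset.prod_erase_mul _ _ (Finset.mem_univ p), Function.update_self, measure_univ, mul_one,
    ← Finset.prod_erase_mul (a := p) _ _ (Finset.mem_univ p)]
  congr 1
  refine Finset.prod_congr rfl fun j hj => ?_
  rw [Function.update_of_ne (Finset.ne_of_mem_erase hj)]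

lemma integral_pi_eq_integral_update {X : ι → Type*} [∀ i, MeasurableSpace (X i)]
    (μ : ∀ i, Measure (X i)) [∀ i, IsProbabilityMeasure (μ i)] (p : ι) {f : (∀ i, X i) → ℝ}
    (hf : Integrable f (Measure.pi μ)) :
    ∫ x, f x ∂Measure.pi μ = ∫ x, ∫ y, f (Function.update x p y) ∂μ p ∂Measure.pi μ := by
  have hupdate := measurePreserving_update μ p
  rw [← integral_prod (fun z : (∀ i, X i) × X p => f (Function.update z.1 p z.2))
    (hupdate.integrable_comp_of_integrable hf)]
  conv_lhs => rw [← hupdate.map_eq]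
  exact integral_map hupdate.aemeasurable
    (by rw [hupdate.map_eq]; exact hf.aestronglyMeasurable)

lemma integral_sub_mul_pi_gaussianReal (m : ι → ℝ) (v : ι → NNReal) (p : ι)
    {F F' : (ι → ℝ) → ℝ}
    (hF : ∀ x y, HasDerivAt (fun y => F (Function.update x p y)) (F' (Function.update x p y)) y)
    (hint : Integrable F (Measure.pi fun i => gaussianReal (m i) (v i)))
    (hint_mul : Integrable (fun x => (x p - m p) * F x)
      (Measure.pi fun i => gaussianReal (m i) (v i)))
    (hint' : Integrable F' (Measure.pi fun i => gaussianReal (m i) (v i))) :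
    ∫ x, (x p - m p) * F x ∂Measure.pi (fun i => gaussianReal (m i) (v i)) =
      v p * ∫ x, F' x ∂Measure.pi (fun i => gaussianReal (m i) (v i)) := by
  have hupdate := measurePreserving_update (fun i => gaussianReal (m i) (v i)) p
  rw [integral_pi_eq_integral_update _ p hint_mul, integral_pi_eq_integral_update _ p hint',
    ← integral_const_mul]
  refine integral_congr_ae ?_
  filter_upwards [(hupdate.integrable_comp_of_integrable hint).prod_right_ae,
    (hupdate.integrable_comp_of_integrable hint_mul).prod_right_ae,
    (hupdate.integrable_comp_of_integrable hint').prod_right_ae] with x hx hx_mul hx'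
  simp only [Function.comp_apply, Function.update_self] at hx hx_mul hx' ⊢
  exact integral_sub_mul_gaussianReal (hF x) hx hx_mul hx'

end GaussianIntegrationByParts

/-! ### Gaussian concentration -/

section GaussianConcentration

lemma ofReal_exp_integral_le_average {h : ℝ → ℝ} (hh : Continuous h) {T : ℝ} (hT : 0 < T) :
    ENNReal.ofReal (Real.exp (∫ θ in 0..T, h θ)) ≤
      ENNReal.ofReal T⁻¹ * ∫⁻ θ in Set.Ioc 0 T, ENNReal.ofReal (Real.exp (T * h θ)) := by
  have hvol : volume.real (Set.Ioc 0 T) = T := by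
    rw [Real.volume_real_Ioc_of_le hT.le, sub_zero]
  have hint : ∀ k : ℝ → ℝ, Continuous k → IntegrableOn k (Set.Ioc 0 T) := fun k hk =>
    hk.integrableOn_Icc.mono_set Set.Ioc_subset_Icc_self
  have hjensen := convexOn_exp.map_set_average_le (μ := volume) (t := Set.Ioc 0 T)
    (f := fun θ => T * h θ) Real.continuous_exp.continuousOn isClosed_univ
    (by simp [hT]) (by simp) (by simp) (hint _ (by fun_prop)) (hint _ (by fun_prop))
  rw [setAverage_eq, setAverage_eq, hvol, integral_const_mul, smul_eq_mul, smul_eq_mul,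
    inv_mul_cancel_left₀ hT.ne'] at hjensen
  rw [intervalIntegral.integral_of_le hT.le]
  refine (ENNReal.ofReal_le_ofReal hjensen).trans_eq ?_
  rw [ENNReal.ofReal_mul (by positivity),
    ofReal_integral_eq_lintegral_ofReal (hint _ (by fun_prop))
      (.of_forall fun θ => (Real.exp_pos _).le)]

variable {Ω : Type*} [MeasurableSpace Ω]

lemma integral_exp_le_of_integrable_exp_sub {μ : Measure Ω} [IsProbabilityMeasure μ]
    {f : Ω → ℝ} (hf : AEStronglyMeasurable f μ)
    (hint : Integrable (fun z : Ω × Ω => Real.exp (f z.2 - f z.1)) (μ.prod μ)) :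
    Integrable f μ ∧ Integrable (fun x => Real.exp (f x)) μ ∧
      ∫ x, Real.exp (f x) ∂μ ≤
        Real.exp (∫ x, f x ∂μ) * ∫ z, Real.exp (f z.2 - f z.1) ∂μ.prod μ := by
  have hfactor : ∀ z : Ω × Ω, Real.exp (f z.2 - f z.1) = Real.exp (-f z.1) * Real.exp (f z.2) :=
    fun z => by rw [← Real.exp_add, neg_add_eq_sub]
  simp only [hfactor] at hint ⊢
  have hexp : Integrable (fun x => Real.exp (f x)) μ := by
    obtain ⟨x, hx⟩ := hint.prod_right_ae.exists
    exact (integrable_const_mul_iff (Real.exp_pos (-f x)).ne'.isUnit _).1 hx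
  have hexp_neg : Integrable (fun x => Real.exp (-f x)) μ := by
    obtain ⟨y, hy⟩ := hint.prod_left_ae.exists
    exact (integrable_mul_const_iff (Real.exp_pos (f y)).ne'.isUnit _).1 hy
  have hf_int : Integrable f μ := by
    refine (hexp.add hexp_neg).mono' hf (.of_forall fun x => ?_)
    rw [Real.norm_eq_abs, Pi.add_apply]
    exact (Real.add_one_le_exp |f x|).trans' (by simp) |>.trans (Real.exp_abs_le _)
  refine ⟨hf_int, hexp, ?_⟩
  have hjensen : Real.exp (∫ x, -f x ∂μ) ≤ ∫ x, Real.exp (-f x) ∂μ :=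
    convexOn_exp.map_integral_le Real.continuous_exp.continuousOn isClosed_univ (by simp)
      hf_int.neg hexp_neg
  rw [integral_neg, Real.exp_neg, inv_le_iff_one_le_mul₀' (Real.exp_pos _)] at hjensen
  rw [integral_prod_mul (fun x => Real.exp (-f x)) fun x => Real.exp (f x), ← mul_assoc]
  exact le_mul_of_one_le_left (integral_nonneg fun x => (Real.exp_pos _).le) hjensen

variable {E : Type*} [NormedAddCommGroup E] [NormedSpace ℝ E]

lemma sub_eq_integral_fderiv_rotation {f : E → ℝ} (hf : ContDiff ℝ 1 f) (z : E × E) :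
    f z.2 - f z.1 = ∫ θ in 0..Real.pi / 2,
      fderiv ℝ f (ContinuousLinearMap.rotation θ z).1 (ContinuousLinearMap.rotation θ z).2 := by
  have hderiv : ∀ θ : ℝ, HasDerivAt (fun y : ℝ => f (ContinuousLinearMap.rotation y z).1)
      (fderiv ℝ f (ContinuousLinearMap.rotation θ z).1 (ContinuousLinearMap.rotation θ z).2)
      θ := fun θ => by
    refine (hf.differentiable one_ne_zero _).hasFDerivAt.comp_hasDerivAt θ ?_
    simp only [ContinuousLinearMap.rotation_apply]
    exact ((Real.hasDerivAt_cos θ).smul_const _).add ((Real.hasDerivAt_sin θ).smul_const _)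
  rw [intervalIntegral.integral_eq_sub_of_hasDerivAt fun θ _ => hderiv θ]
  · simp [ContinuousLinearMap.rotation_apply]
  · have := hf.continuous_fderiv one_ne_zero
    refine Continuous.intervalIntegrable ?_ _ _
    simp only [ContinuousLinearMap.rotation_apply]
    fun_prop

variable [MeasurableSpace E] {μ : Measure E} [IsGaussian μ]

lemma lintegral_exp_strongDual (ℓ : StrongDual ℝ E) :
    ∫⁻ x, ENNReal.ofReal (Real.exp (ℓ x)) ∂μ =
      ENNReal.ofReal (Real.exp (μ[ℓ] + Var[ℓ; μ] / 2)) := by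
  have hmgf := mgf_gaussianReal (IsGaussian.map_eq_gaussianReal (μ := μ) ℓ) 1
  have hint : Integrable (fun x => Real.exp (1 * ℓ x)) μ :=
    mgf_pos_iff.1 (hmgf ▸ Real.exp_pos _)
  simp only [mgf, one_mul, mul_one, one_pow, Real.coe_toNNReal _ (variance_nonneg ℓ μ)]
    at hmgf hint
  rw [← ofReal_integral_eq_lintegral_ofReal hint (.of_forall fun x => (Real.exp_pos _).le), hmgf]

variable [BorelSpace E] [CompleteSpace E] [SecondCountableTopology E]

lemma lintegral_exp_fderiv_le {f : E → ℝ} (hμ : μ[id] = 0) (hf : ContDiff ℝ 1 f) {L : ℝ}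
    (hL : ∀ x, Var[fderiv ℝ f x; μ] ≤ L) (T : ℝ) :
    ∫⁻ z, ENNReal.ofReal (Real.exp (T * fderiv ℝ f z.1 z.2)) ∂μ.prod μ ≤
      ENNReal.ofReal (Real.exp (T ^ 2 * L / 2)) := by
  have := hf.continuous_fderiv one_ne_zero
  rw [lintegral_prod _ (by fun_prop)]
  calc _ ≤ ∫⁻ _ : E, ENNReal.ofReal (Real.exp (T ^ 2 * L / 2)) ∂μ := lintegral_mono fun x => ?_
    _ = _ := by rw [lintegral_const, measure_univ, mul_one]
  have hmean : μ[⇑(T • fderiv ℝ f x)] = 0 := by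
    have h := (T • fderiv ℝ f x).integral_comp_comm (IsGaussian.integrable_id (μ := μ))
    rwa [hμ, map_zero] at h
  have h := lintegral_exp_strongDual (μ := μ) (T • fderiv ℝ f x)
  rw [hmean, zero_add, FunLike.coe_smul, variance_smul] at h
  refine h.trans_le ?_
  gcongr
  exact hL x

lemma lintegral_exp_sub_le {f : E → ℝ} (hμ : μ[id] = 0) (hf : ContDiff ℝ 1 f) {L : ℝ}
    (hL : ∀ x, Var[fderiv ℝ f x; μ] ≤ L) :
    ∫⁻ z, ENNReal.ofReal (Real.exp (f z.2 - f z.1)) ∂μ.prod μ ≤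
      ENNReal.ofReal (Real.exp (Real.pi ^ 2 * L / 8)) := by
  have := hf.continuous_fderiv one_ne_zero
  set T : ℝ := Real.pi / 2 with hT
  have hT0 : 0 < T := Real.pi_div_two_pos
  -- `v θ z` is the velocity of `f` along the quarter circle joining the two independent copies
  let v : ℝ → E × E → ℝ := fun θ z =>
    fderiv ℝ f (ContinuousLinearMap.rotation θ z).1 (ContinuousLinearMap.rotation θ z).2
  have : Continuous fun q : (E × E) × ℝ => v q.2 q.1 := by
    simp only [v, ContinuousLinearMap.rotation_apply]
    fun_prop
  have hvel : ∀ θ, ∫⁻ z, ENNReal.ofReal (Real.exp (T * v θ z)) ∂μ.prod μ ≤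
      ENNReal.ofReal (Real.exp (T ^ 2 * L / 2)) := fun θ => by
    rw [← lintegral_map (μ := μ.prod μ)
      (f := fun z : E × E => ENNReal.ofReal (Real.exp (T * fderiv ℝ f z.1 z.2)))
      (by fun_prop) (ContinuousLinearMap.rotation θ).continuous.measurable,
      IsGaussian.map_rotation_eq_self hμ θ]
    exact lintegral_exp_fderiv_le hμ hf hL T
  calc ∫⁻ z, ENNReal.ofReal (Real.exp (f z.2 - f z.1)) ∂μ.prod μ
      ≤ ∫⁻ z, ENNReal.ofReal T⁻¹ * (∫⁻ θ in Set.Ioc 0 T,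
          ENNReal.ofReal (Real.exp (T * v θ z))) ∂μ.prod μ := by
        refine lintegral_mono fun z => ?_
        rw [sub_eq_integral_fderiv_rotation hf z]
        exact ofReal_exp_integral_le_average (by fun_prop) hT0
    _ = ENNReal.ofReal T⁻¹ * ∫⁻ θ in Set.Ioc 0 T,
          ∫⁻ z, ENNReal.ofReal (Real.exp (T * v θ z)) ∂μ.prod μ := by
        rw [lintegral_const_mul' _ _ ENNReal.ofReal_ne_top, lintegral_lintegral_swap]
        exact Measurable.aemeasurable (by fun_prop)
    _ ≤ ENNReal.ofReal T⁻¹ * ∫⁻ _θ in Set.Ioc 0 T, ENNReal.ofReal (Real.exp (T ^ 2 * L / 2)) := by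
        gcongr with θ
        exact hvel θ
    _ = ENNReal.ofReal (Real.exp (Real.pi ^ 2 * L / 8)) := by
        rw [setLIntegral_const, Real.volume_Ioc, sub_zero, mul_left_comm,
          ← ENNReal.ofReal_mul (by positivity), inv_mul_cancel₀ hT0.ne', ENNReal.ofReal_one,
          mul_one, hT]
        ring_nf

/-- **Maurey–Pisier concentration**. -/
theorem integral_exp_le_of_variance_fderiv_le {f : E → ℝ} (hμ : μ[id] = 0)
    (hf : ContDiff ℝ 1 f) {L : ℝ} (hL : ∀ x, Var[fderiv ℝ f x; μ] ≤ L) :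
    Integrable f μ ∧ Integrable (fun x => Real.exp (f x)) μ ∧
      ∫ x, Real.exp (f x) ∂μ ≤ Real.exp (∫ x, f x ∂μ + Real.pi ^ 2 * L / 8) := by
  have hmeas : AEStronglyMeasurable (fun z : E × E => Real.exp (f z.2 - f z.1)) (μ.prod μ) := by
    have := hf.continuous
    fun_prop
  have hle := lintegral_exp_sub_le hμ hf hL
  have hint : Integrable (fun z : E × E => Real.exp (f z.2 - f z.1)) (μ.prod μ) :=
    (lintegral_ofReal_ne_top_iff_integrable hmeas (.of_forall fun z => (Real.exp_pos _).le)).1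
      (hle.trans_lt ENNReal.ofReal_lt_top).ne
  obtain ⟨hf_int, hexp, hbound⟩ :=
    integral_exp_le_of_integrable_exp_sub hf.continuous.aestronglyMeasurable hint
  rw [← ofReal_integral_eq_lintegral_ofReal hint (.of_forall fun z => (Real.exp_pos _).le),
    ENNReal.ofReal_le_ofReal_iff (Real.exp_pos _).le] at hle
  refine ⟨hf_int, hexp, hbound.trans ?_⟩
  rw [Real.exp_add]
  exact mul_le_mul_of_nonneg_left hle (Real.exp_pos _).le

end GaussianConcentration

/-! ### Bipartite skew-symmetric matrices -/

section BipartiteSkew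
variable {n : Type*} [Fintype n] [DecidableEq n]

/-- A skew-symmetric matrix whose nonzero entries join `U` to its complement. -/
structure IsBipartiteSkew (S : Matrix n n ℝ) (U : Finset n) : Prop where
  transpose_eq : Sᵀ = -S
  apply_eq_zero : ∀ i j, (i ∈ U ↔ j ∈ U) → S i j = 0

/-- The part of the trace of `shiftInv S s` carried by the indices in `U`. -/
noncomputable def sideTrace (S : Matrix n n ℝ) (U : Finset n) (s : ℝ) : ℝ :=
  ∑ i ∈ U, shiftInv S s i i

/-- The function `s ↦ log det (s + S)`. -/
noncomputable def logDetShift (S : Matrix n n ℝ) (s : ℝ) : ℝ :=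
  Real.log (s • (1 : Matrix n n ℝ) + S).det

variable {S : Matrix n n ℝ} {U : Finset n} {s : ℝ}

lemma exp_logDetShift (hS : Sᵀ = -S) (hs : 0 < s) :
    Real.exp (logDetShift S s) = |(s • (1 : Matrix n n ℝ) + S).det| :=
  Real.exp_log_eq_abs (isUnit_det_smul_one_add hS hs).ne_zero

lemma hasDerivAt_logDetShift (hS : Sᵀ = -S) (hs : 0 < s) :
    HasDerivAt (logDetShift S) (shiftInv S s).trace s :=
  hasDerivAt_log_det_smul_one_add (isUnit_det_smul_one_add hS hs)

lemma sideTrace_nonneg (hS : Sᵀ = -S) (U : Finset n) (hs : 0 < s) : 0 ≤ sideTrace S U s :=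
  Finset.sum_nonneg fun i _ => shiftInv_apply_self_nonneg hS hs i

lemma sideTrace_add_compl (S : Matrix n n ℝ) (U : Finset n) (s : ℝ) :
    sideTrace S U s + sideTrace S Uᶜ s = (shiftInv S s).trace :=
  Finset.sum_add_sum_compl U _

lemma trace_shiftInv_le (hS : Sᵀ = -S) (hs : 0 < s) :
    (shiftInv S s).trace ≤ Fintype.card n / s := by
  calc _ ≤ ∑ _i : n, 1 / s := Finset.sum_le_sum fun i _ => shiftInv_apply_self_le hS hs i
    _ = _ := by rw [Finset.sum_const, Finset.card_univ, nsmul_eq_mul, mul_one_div]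

lemma trace_shiftInv_nonneg (hS : Sᵀ = -S) (hs : 0 < s) : 0 ≤ (shiftInv S s).trace :=
  Finset.sum_nonneg fun i _ => shiftInv_apply_self_nonneg hS hs i

lemma sideTrace_le (hS : Sᵀ = -S) (U : Finset n) (hs : 0 < s) :
    sideTrace S U s ≤ Fintype.card n / s := by
  have h := sideTrace_nonneg hS Uᶜ hs
  have h' := trace_shiftInv_le hS hs
  rw [← sideTrace_add_compl S U s] at h'
  linarith

namespace IsBipartiteSkew

lemma signature_mul (h : IsBipartiteSkew S U) :
    diagonal (fun i => if i ∈ U then (1 : ℝ) else -1) * S =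
      -(S * diagonal fun i => if i ∈ U then (1 : ℝ) else -1) := by
  ext i j
  rw [diagonal_mul, Matrix.neg_apply, mul_diagonal]
  by_cases hij : i ∈ U ↔ j ∈ U
  · rw [h.apply_eq_zero i j hij, mul_zero, zero_mul, neg_zero]
  · split_ifs <;> grind

lemma sideTrace_compl (h : IsBipartiteSkew S U) (hs : 0 < s) :
    sideTrace S Uᶜ s = sideTrace S U s + ((Uᶜ.card : ℝ) - U.card) / s := by
  have hsplit : ∀ F : n → ℝ,
      ∑ i, (if i ∈ U then (1 : ℝ) else -1) * F i = ∑ i ∈ U, F i - ∑ i ∈ Uᶜ, F i := fun F => by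
    simp only [ite_mul, one_mul, neg_one_mul]
    rw [Finset.sum_ite, Finset.sum_neg_distrib, Finset.filter_mem_eq_inter, Finset.univ_inter,
      Finset.filter_notMem_eq_sdiff, ← Finset.compl_eq_univ_sdiff, sub_eq_add_neg]
  have htrace := mul_trace_mul_shiftInv_of_anticommute h.transpose_eq hs h.signature_mul
  simp only [trace, diag_apply, diagonal_mul] at htrace
  have hone := hsplit fun _ => 1
  simp only [mul_one, Finset.sum_const, nsmul_eq_mul] at hone
  simp only [diagonal_apply_eq, hone, hsplit] at htrace
  rw [← sub_eq_iff_eq_add', eq_div_iff hs.ne']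
  simp only [sideTrace]
  linarith

lemma trace_shiftInv (h : IsBipartiteSkew S U) (hs : 0 < s) :
    (shiftInv S s).trace = 2 * sideTrace S U s + ((Uᶜ.card : ℝ) - U.card) / s := by
  rw [← sideTrace_add_compl S U s, h.sideTrace_compl hs]
  ring

lemma monotoneOn_logDetShift_sub (h : IsBipartiteSkew S U) :
    MonotoneOn (fun s => logDetShift S s - ((Uᶜ.card : ℝ) - U.card) * Real.log s)
      (Set.Ioi 0) := by
  have hderiv : ∀ s ∈ Set.Ioi (0 : ℝ), HasDerivAt
      (fun s => logDetShift S s - ((Uᶜ.card : ℝ) - U.card) * Real.log s)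
      (2 * sideTrace S U s) s := fun s (hs : 0 < s) => by
    refine ((hasDerivAt_logDetShift h.transpose_eq hs).sub
      ((Real.hasDerivAt_log hs.ne').const_mul _)).congr_deriv ?_
    rw [h.trace_shiftInv hs]
    ring
  refine monotoneOn_of_hasDerivWithinAt_nonneg (convex_Ioi 0)
    (fun s hs => (hderiv s hs).continuousAt.continuousWithinAt)
    (f' := fun s => 2 * sideTrace S U s) ?_ ?_
  · exact fun s hs => (hderiv s (interior_subset hs)).hasDerivWithinAt
  · exact fun s hs => mul_nonneg zero_le_two
      (sideTrace_nonneg h.transpose_eq U (interior_subset hs))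

lemma sum_compl_mul_shiftInv (h : IsBipartiteSkew S U) (hs : 0 < s) {i : n} (hi : i ∈ U) :
    ∑ j ∈ Uᶜ, S i j * shiftInv S s j i = 1 - s * shiftInv S s i i := by
  have hside : ∑ j ∈ U, S i j * shiftInv S s j i = 0 := Finset.sum_eq_zero fun j hj => by
    rw [h.apply_eq_zero i j (iff_of_true hi hj), zero_mul]
  have hdiag := congrFun₂ (smul_shiftInv_add_mul h.transpose_eq hs) i i
  rw [Matrix.add_apply, Matrix.smul_apply, one_apply_eq, mul_apply,
    ← Finset.sum_add_sum_compl U, hside, zero_add, smul_eq_mul] at hdiag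
  linarith

end IsBipartiteSkew

end BipartiteSkew

section StandardGaussian
variable {ι : Type*} [Fintype ι]

lemma isGaussian_pi {E : ι → Type*} [∀ i, NormedAddCommGroup (E i)] [∀ i, NormedSpace ℝ (E i)]
    [∀ i, MeasurableSpace (E i)] [∀ i, BorelSpace (E i)] [∀ i, SecondCountableTopology (E i)]
    [∀ i, CompleteSpace (E i)] (μ : ∀ i, Measure (E i)) [∀ i, IsGaussian (μ i)] :
    IsGaussian (Measure.pi μ) := by
  have hindep : iIndepFun (fun i (x : ∀ i, E i) => x i) (Measure.pi μ) :=
    iIndepFun_pi (X := fun _ x => x) fun _ => aemeasurable_id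
  have hlaw := hindep.hasGaussianLaw fun i =>
    ⟨by rw [(measurePreserving_eval μ i).map_eq]; infer_instance⟩
  exact Measure.map_id (μ := Measure.pi μ) ▸ hlaw.isGaussian_map

variable [DecidableEq ι]

lemma variance_strongDual_pi {μ : ι → Measure ℝ} [∀ i, IsProbabilityMeasure (μ i)]
    (hμ : ∀ i, MemLp id 2 (μ i)) (ℓ : StrongDual ℝ (ι → ℝ)) :
    Var[ℓ; Measure.pi μ] = ∑ i, ℓ (Pi.single i 1) ^ 2 * Var[id; μ i] := by
  have hℓ : (ℓ : (ι → ℝ) → ℝ) = ∑ i, fun x => ℓ (Pi.single i 1) * id (x i) := by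
    ext x
    conv_lhs => rw [pi_eq_sum_univ' x, map_sum]
    rw [Finset.sum_apply]
    exact Finset.sum_congr rfl fun i _ => by rw [map_smul, smul_eq_mul, mul_comm, id]
  conv_lhs => rw [hℓ, variance_sum_pi fun i => (hμ i).const_mul _]
  simp only [variance_const_mul]

end StandardGaussian

/-! ### The Gaussian matrix `sampleY A` -/

section SampleMatrix
variable {N : ℕ} {A : Matrix (Fin N) (Fin N) ℝ}

instance : IsGaussian (gaussPi N) := isGaussian_pi _

lemma integral_id_gaussPi : (gaussPi N)[id] = 0 := by
  ext p
  have hint : ∀ q, Integrable (fun ξ : PairIdx N → ℝ => ξ q) (gaussPi N) := fun q =>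
    (IsGaussian.integrable_id (μ := gaussPi N)).eval q
  refine (eval_integral hint p).trans ?_
  exact (integral_comp_eval (X := fun _ : PairIdx N => ℝ) (f := fun x : ℝ => x)
    aestronglyMeasurable_id).trans integral_id_gaussianReal

/-- The index of the Gaussian variable in positions `(i, j)` and `(j, i)` of `sampleY A ξ`. -/
def slot (i j : Fin N) (h : i ≠ j) : PairIdx N :=
  ⟨(min i j, max i j), min_lt_max.2 h⟩

lemma slot_comm {i j : Fin N} (h : i ≠ j) : slot j i h.symm = slot i j h := by
  simp only [slot, min_comm, max_comm]

lemma slot_of_lt {i j : Fin N} (h : i < j) : slot i j h.ne = ⟨(i, j), h⟩ := by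
  simp only [slot, min_eq_left h.le, max_eq_right h.le]

lemma slot_eq_slot_iff {i j k l : Fin N} (h : i ≠ j) (h' : k ≠ l) :
    slot i j h = slot k l h' ↔ i = k ∧ j = l ∨ i = l ∧ j = k := by
  simp only [slot, Subtype.mk.injEq, Prod.mk.injEq]
  grind

lemma sampleY_apply (A : Matrix (Fin N) (Fin N) ℝ) (ξ : PairIdx N → ℝ) {i j : Fin N}
    (h : i ≠ j) : sampleY A ξ i j = A i j * ξ (slot i j h) := by
  rcases h.lt_or_gt with hlt | hgt
  · rw [slot_of_lt hlt, sampleY, of_apply, dif_pos hlt]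
  · rw [← slot_comm h, slot_of_lt hgt, sampleY, of_apply, dif_neg hgt.not_gt, dif_pos hgt]

lemma sampleY_apply_self (A : Matrix (Fin N) (Fin N) ℝ) (ξ : PairIdx N → ℝ) (i : Fin N) :
    sampleY A ξ i i = 0 := by
  rw [sampleY, of_apply, dif_neg (lt_irrefl i), dif_neg (lt_irrefl i)]

lemma sampleY_transpose (hA : Aᵀ = -A) (ξ : PairIdx N → ℝ) :
    (sampleY A ξ)ᵀ = -sampleY A ξ := by
  ext i j
  rw [transpose_apply, neg_apply]
  rcases eq_or_ne i j with rfl | h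
  · rw [sampleY_apply_self, neg_zero]
  · have hskew : A j i = -A i j := congrFun₂ hA i j
    rw [sampleY_apply A ξ h, sampleY_apply A ξ h.symm, slot_comm h, hskew, neg_mul]

lemma sampleY_single (A : Matrix (Fin N) (Fin N) ℝ) {i j : Fin N} (h : i ≠ j) :
    sampleY A (Pi.single (slot i j h) 1) =
      Matrix.single i j (A i j) + Matrix.single j i (A j i) := by
  ext k l
  rw [Matrix.add_apply, single_apply, single_apply]
  rcases eq_or_ne k l with rfl | hkl
  · rw [sampleY_apply_self, if_neg (by grind), if_neg (by grind), add_zero]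
  · rw [sampleY_apply A _ hkl, Pi.single_apply]
    simp only [slot_eq_slot_iff]
    grind

/-- `sampleY` as a continuous linear map in the Gaussian variables. -/
noncomputable def sampleYCLM (A : Matrix (Fin N) (Fin N) ℝ) :
    (PairIdx N → ℝ) →L[ℝ] Matrix (Fin N) (Fin N) ℝ :=
  LinearMap.toContinuousLinearMap
    { toFun := sampleY A
      map_add' := fun ξ η => by
        ext i j
        rcases eq_or_ne i j with rfl | h
        · simp only [Matrix.add_apply, sampleY_apply_self, add_zero]
        · simp only [Matrix.add_apply, sampleY_apply A _ h, Pi.add_apply, mul_add]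
      map_smul' := fun c ξ => by
        ext i j
        rcases eq_or_ne i j with rfl | h
        · simp only [Matrix.smul_apply, sampleY_apply_self, smul_zero]
        · simp only [Matrix.smul_apply, sampleY_apply A _ h, Pi.smul_apply, smul_eq_mul,
            RingHom.id_apply, mul_left_comm] }

end SampleMatrix

section RandomResolvent
variable {N : ℕ} {A : Matrix (Fin N) (Fin N) ℝ} {s : ℝ}

lemma isUnit_det_smul_one_add_sampleY (hA : Aᵀ = -A) (hs : 0 < s) (ξ : PairIdx N → ℝ) :
    IsUnit (s • (1 : Matrix (Fin N) (Fin N) ℝ) + sampleY A ξ).det :=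
  isUnit_det_smul_one_add (sampleY_transpose hA ξ) hs

open scoped Matrix.Norms.Operator in
lemma contDiff_logDetShift_sampleY (hA : Aᵀ = -A) (hs : 0 < s) {k : WithTop ℕ∞} :
    ContDiff ℝ k fun ξ => logDetShift (sampleY A ξ) s := by
  have hM : ContDiff ℝ k fun ξ => s • (1 : Matrix (Fin N) (Fin N) ℝ) + sampleYCLM A ξ :=
    contDiff_const.add (sampleYCLM A).contDiff
  exact (contDiff_det.comp hM).log fun ξ => (isUnit_det_smul_one_add_sampleY hA hs ξ).ne_zero

open scoped Matrix.Norms.Operator in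
lemma fderiv_logDetShift_sampleY_apply (hA : Aᵀ = -A) (hs : 0 < s) (ξ η : PairIdx N → ℝ) :
    fderiv ℝ (fun ξ => logDetShift (sampleY A ξ) s) ξ η =
      (shiftInv (sampleY A ξ) s * sampleY A η).trace := by
  have hM : HasFDerivAt (fun ξ => s • (1 : Matrix (Fin N) (Fin N) ℝ) + sampleY A ξ)
      (sampleYCLM A) ξ := (sampleYCLM A).hasFDerivAt.const_add _
  have h := (hasFDerivAt_log_det (isUnit_det_smul_one_add_sampleY hA hs ξ)).comp ξ hM
  exact congrArg (fun ℓ : StrongDual ℝ (PairIdx N → ℝ) => ℓ η) h.fderiv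

lemma fderiv_logDetShift_sampleY_single (hA : Aᵀ = -A) (hs : 0 < s) (ξ : PairIdx N → ℝ)
    (p : PairIdx N) :
    fderiv ℝ (fun ξ => logDetShift (sampleY A ξ) s) ξ (Pi.single p 1) =
      A p.1.1 p.1.2 * shiftInv (sampleY A ξ) s p.1.2 p.1.1 +
        A p.1.2 p.1.1 * shiftInv (sampleY A ξ) s p.1.1 p.1.2 := by
  have hsingle := sampleY_single A p.2.ne
  rw [slot_of_lt p.2] at hsingle
  rw [fderiv_logDetShift_sampleY_apply hA hs, hsingle, Matrix.mul_add, trace_add,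
    trace_mul_single, trace_mul_single]
  simp only [op_smul_eq_smul, smul_eq_mul]

lemma sum_lt_add_swap_le {ι : Type*} [Fintype ι] [LinearOrder ι] {H : ι → ι → ℝ}
    (hH : ∀ i j, 0 ≤ H i j) :
    ∑ p : {p : ι × ι // p.1 < p.2}, (H p.1.1 p.1.2 + H p.1.2 p.1.1) ≤ ∑ i, ∑ j, H i j := by
  have hsub : ∑ p : {p : ι × ι // p.1 < p.2}, (H p.1.1 p.1.2 + H p.1.2 p.1.1) =
      ∑ p : ι × ι with p.1 < p.2, (H p.1 p.2 + H p.2 p.1) :=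
    (Finset.sum_subtype _ (by simp) fun p : ι × ι => H p.1 p.2 + H p.2 p.1).symm
  have hle : ∀ i j : ι,
      (if i < j then H i j else 0) + (if j < i then H i j else 0) ≤ H i j := fun i j => by
    have := hH i j
    grind
  calc _ = ∑ i, ∑ j, (if i < j then H i j else 0) + ∑ i, ∑ j, (if i < j then H j i else 0) := by
        rw [hsub, Finset.sum_add_distrib, Finset.sum_filter, Finset.sum_filter,
          Fintype.sum_prod_type, Fintype.sum_prod_type]
    _ = ∑ i, ∑ j, ((if i < j then H i j else 0) + (if j < i then H i j else 0)) := by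
        rw [Finset.sum_comm (f := fun i j => if i < j then H j i else 0)]
        simp only [Finset.sum_add_distrib]
    _ ≤ _ := Finset.sum_le_sum fun i _ => Finset.sum_le_sum fun j _ => hle i j

variable {a : ℝ}

lemma variance_fderiv_logDetShift_le (hA : Aᵀ = -A) (ha : ∀ i j, A i j ^ 2 ≤ a ^ 2) (hs : 0 < s)
    (ξ : PairIdx N → ℝ) :
    Var[fderiv ℝ (fun ξ => logDetShift (sampleY A ξ) s) ξ; gaussPi N] ≤
      2 * a ^ 2 * (N / s ^ 2) := by
  set G := shiftInv (sampleY A ξ) s with hG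
  have hcoord : ∀ i j, (A i j * G j i + A j i * G i j) ^ 2 ≤
      2 * a ^ 2 * (G j i ^ 2 + G i j ^ 2) := fun i j => by
    have hij := mul_le_mul_of_nonneg_right (ha i j) (sq_nonneg (G j i))
    have hji := mul_le_mul_of_nonneg_right (ha j i) (sq_nonneg (G i j))
    nlinarith [sq_nonneg (A i j * G j i - A j i * G i j)]
  rw [gaussPi, variance_strongDual_pi fun _ => memLp_id_gaussianReal 2]
  simp only [variance_id_gaussianReal, NNReal.coe_one, mul_one,
    fderiv_logDetShift_sampleY_single hA hs, ← hG]
  calc _ ≤ ∑ p : PairIdx N, 2 * a ^ 2 * (G p.1.2 p.1.1 ^ 2 + G p.1.1 p.1.2 ^ 2) :=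
        Finset.sum_le_sum fun p _ => hcoord _ _
    _ ≤ 2 * a ^ 2 * ∑ i, ∑ j, G j i ^ 2 := by
        rw [← Finset.mul_sum]
        exact mul_le_mul_of_nonneg_left
          (sum_lt_add_swap_le (H := fun i j => G j i ^ 2) fun _ _ => sq_nonneg _) (by positivity)
    _ ≤ _ := by
        refine mul_le_mul_of_nonneg_left ?_ (by positivity)
        have h := sum_sum_shiftInv_sq_le (sampleY_transpose hA ξ) hs
        rwa [Fintype.card_fin] at h

theorem integral_exp_logDetShift_le (hA : Aᵀ = -A) (ha : ∀ i j, A i j ^ 2 ≤ a ^ 2) (hs : 0 < s) :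
    Integrable (fun ξ => logDetShift (sampleY A ξ) s) (gaussPi N) ∧
      Integrable (fun ξ => Real.exp (logDetShift (sampleY A ξ) s)) (gaussPi N) ∧
      ∫ ξ, Real.exp (logDetShift (sampleY A ξ) s) ∂gaussPi N ≤
        Real.exp (∫ ξ, logDetShift (sampleY A ξ) s ∂gaussPi N +
          Real.pi ^ 2 * (2 * a ^ 2 * (N / s ^ 2)) / 8) :=
  integral_exp_le_of_variance_fderiv_le integral_id_gaussPi (contDiff_logDetShift_sampleY hA hs)
    (variance_fderiv_logDetShift_le hA ha hs)

lemma continuous_shiftInv_sampleY (hA : Aᵀ = -A) (hs : 0 < s) (i j : Fin N) :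
    Continuous fun ξ => shiftInv (sampleY A ξ) s i j := by
  have hM : Continuous fun ξ => s • (1 : Matrix (Fin N) (Fin N) ℝ) + sampleY A ξ :=
    continuous_const.add (sampleYCLM A).continuous
  simp only [shiftInv, inv_def, Matrix.smul_apply, Ring.inverse_eq_inv', smul_eq_mul]
  exact (hM.matrix_det.inv₀ fun ξ => (isUnit_det_smul_one_add_sampleY hA hs ξ).ne_zero).mul
    (hM.matrix_adjugate.matrix_elem i j)

lemma integrable_shiftInv_sampleY (hA : Aᵀ = -A) (hs : 0 < s) (i j : Fin N) :
    Integrable (fun ξ => shiftInv (sampleY A ξ) s i j) (gaussPi N) :=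
  .of_bound (continuous_shiftInv_sampleY hA hs i j).aestronglyMeasurable (1 / s)
    (ae_of_all _ fun ξ => abs_shiftInv_apply_le (sampleY_transpose hA ξ) hs i j)

lemma integrable_mul_shiftInv_sampleY (hA : Aᵀ = -A) (hs : 0 < s) (i j : Fin N)
    {F : (PairIdx N → ℝ) → ℝ} (hF : Integrable F (gaussPi N)) :
    Integrable (fun ξ => F ξ * shiftInv (sampleY A ξ) s i j) (gaussPi N) :=
  hF.mul_bdd (c := 1 / s) (continuous_shiftInv_sampleY hA hs i j).aestronglyMeasurable
    (ae_of_all _ fun ξ => abs_shiftInv_apply_le (sampleY_transpose hA ξ) hs i j)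

end RandomResolvent

section SteinIdentity
variable {N : ℕ} {A : Matrix (Fin N) (Fin N) ℝ} {s : ℝ}

open scoped Matrix.Norms.Operator in
lemma hasDerivAt_shiftInv_sampleY_update (hA : Aᵀ = -A) (hs : 0 < s) (ξ : PairIdx N → ℝ)
    (p : PairIdx N) (y : ℝ) (i j : Fin N) :
    HasDerivAt (fun y => shiftInv (sampleY A (Function.update ξ p y)) s i j)
      (-(shiftInv (sampleY A (Function.update ξ p y)) s * sampleY A (Pi.single p 1) *
        shiftInv (sampleY A (Function.update ξ p y)) s) i j) y := by
  have hM : HasDerivAt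
      (fun y => s • (1 : Matrix (Fin N) (Fin N) ℝ) + sampleY A (Function.update ξ p y))
      (sampleY A (Pi.single p 1)) y :=
    ((sampleYCLM A).hasFDerivAt.comp_hasDerivAt y (hasDerivAt_update ξ p y)).const_add _
  have hinv := hasDerivAt_matrix_inv hM (isUnit_det_smul_one_add_sampleY hA hs _)
  exact hasDerivAt_pi.1 (hasDerivAt_pi.1 hinv i) j

lemma mul_single_mul_apply {n R : Type*} [Fintype n] [DecidableEq n] [Semiring R]
    (P Q : Matrix n n R) (i j k l : n) (c : R) :
    (P * single k l c * Q) i j = P i k * c * Q l j := by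
  rw [mul_apply, Finset.sum_eq_single l, mul_single_apply_same]
  · exact fun q _ hq => by rw [mul_single_apply_of_ne _ _ _ _ _ hq, zero_mul]
  · exact fun hl => absurd (Finset.mem_univ l) hl

lemma neg_mul_sampleY_single_mul_apply (hA : Aᵀ = -A) {i j : Fin N} (h : i ≠ j)
    (G : Matrix (Fin N) (Fin N) ℝ) :
    -(G * sampleY A (Pi.single (slot i j h) 1) * G) j i =
      A i j * (G i i * G j j - G j i ^ 2) := by
  have hskew : A j i = -A i j := congrFun₂ hA i j
  rw [sampleY_single, Matrix.mul_add, Matrix.add_mul, Matrix.add_apply, mul_single_mul_apply,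
    mul_single_mul_apply, hskew]
  ring

lemma integrable_mul_minor_shiftInv (hA : Aᵀ = -A) (hs : 0 < s) (c : ℝ) (i j : Fin N) :
    Integrable (fun ξ => c * (shiftInv (sampleY A ξ) s i i * shiftInv (sampleY A ξ) s j j -
      shiftInv (sampleY A ξ) s j i ^ 2)) (gaussPi N) := by
  have hmul := fun k l k' l' => integrable_mul_shiftInv_sampleY hA hs k l
    (integrable_shiftInv_sampleY hA hs k' l')
  simp only [sq]
  exact ((hmul j j i i).sub (hmul j i j i)).const_mul c

lemma integrable_sampleY_mul_shiftInv (hA : Aᵀ = -A) (hs : 0 < s) {i j : Fin N} (h : i ≠ j) :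
    Integrable (fun ξ => sampleY A ξ i j * shiftInv (sampleY A ξ) s j i) (gaussPi N) := by
  have hid := IsGaussian.integrable_id (μ := gaussPi N)
  simp only [sampleY_apply A _ h]
  exact integrable_mul_shiftInv_sampleY hA hs j i ((hid.eval (slot i j h)).const_mul (A i j))

lemma integral_sampleY_mul_shiftInv (hA : Aᵀ = -A) (hs : 0 < s) {i j : Fin N} (h : i ≠ j) :
    ∫ ξ, sampleY A ξ i j * shiftInv (sampleY A ξ) s j i ∂gaussPi N =
      ∫ ξ, A i j ^ 2 * (shiftInv (sampleY A ξ) s i i * shiftInv (sampleY A ξ) s j j -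
        shiftInv (sampleY A ξ) s j i ^ 2) ∂gaussPi N := by
  have hid := IsGaussian.integrable_id (μ := gaussPi N)
  have hstein := integral_sub_mul_pi_gaussianReal (fun _ => 0) (fun _ => 1) (slot i j h)
    (fun ξ y => (hasDerivAt_shiftInv_sampleY_update hA hs ξ (slot i j h) y j i).congr_deriv
      (neg_mul_sampleY_single_mul_apply hA h _))
    (integrable_shiftInv_sampleY hA hs j i)
    (by
      simp only [sub_zero]
      exact integrable_mul_shiftInv_sampleY hA hs j i (hid.eval (slot i j h)))
    (integrable_mul_minor_shiftInv hA hs (A i j) i j)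
  simp only [sub_zero, NNReal.coe_one, one_mul] at hstein
  simp only [sampleY_apply A _ h, mul_assoc, sq (A i j)]
  rw [integral_const_mul, integral_const_mul]
  exact congrArg (A i j * ·) hstein

end SteinIdentity

section SideTraceBounds
variable {n : Type*} [Fintype n] [DecidableEq n] {S : Matrix n n ℝ} {U : Finset n} {s : ℝ}
  {W : n → n → ℝ}

lemma IsBipartiteSkew.sideTrace_le_sideTrace_compl (h : IsBipartiteSkew S U) (hs : 0 < s)
    (hU : U.card ≤ Uᶜ.card) : sideTrace S U s ≤ sideTrace S Uᶜ s := by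
  have hcard : (U.card : ℝ) ≤ Uᶜ.card := by exact_mod_cast hU
  rw [h.sideTrace_compl hs]
  exact le_add_of_nonneg_right (div_nonneg (sub_nonneg.2 hcard) hs.le)

lemma IsBipartiteSkew.mul_sideTrace_sq_le (h : IsBipartiteSkew S U) (hs : 0 < s)
    (hU : U.card ≤ Uᶜ.card) {β : ℝ} (hβ : 0 ≤ β) (hW : ∀ i ∈ U, ∀ j ∈ Uᶜ, β ≤ W i j) :
    β * sideTrace S U s ^ 2 ≤
      ∑ i ∈ U, ∑ j ∈ Uᶜ, W i j * (shiftInv S s i i * shiftInv S s j j) := by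
  have hdiag := shiftInv_apply_self_nonneg h.transpose_eq hs
  calc β * sideTrace S U s ^ 2
      ≤ β * (sideTrace S U s * sideTrace S Uᶜ s) := by
        rw [sq]
        exact mul_le_mul_of_nonneg_left (mul_le_mul_of_nonneg_left
          (h.sideTrace_le_sideTrace_compl hs hU) (sideTrace_nonneg h.transpose_eq U hs)) hβ
    _ = ∑ i ∈ U, ∑ j ∈ Uᶜ, β * (shiftInv S s i i * shiftInv S s j j) := by
        rw [sideTrace, sideTrace, Finset.sum_mul_sum]
        simp only [Finset.mul_sum]
    _ ≤ _ := Finset.sum_le_sum fun i hi => Finset.sum_le_sum fun j hj =>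
        mul_le_mul_of_nonneg_right (hW i hi j hj) (mul_nonneg (hdiag i) (hdiag j))

lemma sum_mul_shiftInv_sq_le (hS : Sᵀ = -S) (hs : 0 < s) (U V : Finset n) {α : ℝ} (hα : 0 ≤ α)
    (hW : ∀ i ∈ U, ∀ j ∈ V, W i j ≤ α) :
    ∑ i ∈ U, ∑ j ∈ V, W i j * shiftInv S s j i ^ 2 ≤ α * (Fintype.card n / s ^ 2) := by
  calc ∑ i ∈ U, ∑ j ∈ V, W i j * shiftInv S s j i ^ 2
      ≤ ∑ i ∈ U, ∑ j ∈ V, α * shiftInv S s j i ^ 2 :=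
        Finset.sum_le_sum fun i hi => Finset.sum_le_sum fun j hj =>
          mul_le_mul_of_nonneg_right (hW i hi j hj) (sq_nonneg _)
    _ = α * ∑ i ∈ U, ∑ j ∈ V, shiftInv S s j i ^ 2 := by simp only [Finset.mul_sum]
    _ ≤ α * ∑ i, ∑ j, shiftInv S s j i ^ 2 := by
        refine mul_le_mul_of_nonneg_left ((Finset.sum_le_sum fun i _ => ?_).trans
          (Finset.sum_le_univ_sum_of_nonneg fun i => ?_)) hα
        · exact Finset.sum_le_univ_sum_of_nonneg fun j => sq_nonneg _
        · exact Finset.sum_nonneg fun j _ => sq_nonneg _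
    _ ≤ _ := mul_le_mul_of_nonneg_left (sum_sum_shiftInv_sq_le hS hs) hα

end SideTraceBounds

section BipartiteWeighting
variable {n : Type*} [Fintype n] [DecidableEq n]

/-- A skew-symmetric weighting, with squared weights in `[b ^ 2, a ^ 2]`, of the complete bipartite
graph with smaller side `U` and larger side `Uᶜ`. -/
structure IsBipartiteWeighting (A : Matrix n n ℝ) (U : Finset n) (b a : ℝ) : Prop
    extends IsBipartiteSkew A U where
  sq_le_sq_apply : ∀ i ∈ U, ∀ j ∈ Uᶜ, b ^ 2 ≤ A i j ^ 2
  sq_apply_le_sq : ∀ i j, A i j ^ 2 ≤ a ^ 2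
  card_le_card_compl : U.card ≤ Uᶜ.card

end BipartiteWeighting

section ExpectedSideTrace
variable {N : ℕ} {A : Matrix (Fin N) (Fin N) ℝ} {U : Finset (Fin N)} {s : ℝ}

lemma isBipartiteSkew_sampleY (h : IsBipartiteSkew A U) (ξ : PairIdx N → ℝ) :
    IsBipartiteSkew (sampleY A ξ) U where
  transpose_eq := sampleY_transpose h.transpose_eq ξ
  apply_eq_zero i j hij := by
    rcases eq_or_ne i j with rfl | hne
    · exact sampleY_apply_self A ξ i
    · rw [sampleY_apply A ξ hne, h.apply_eq_zero i j hij, zero_mul]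

lemma memLp_sideTrace_sampleY (hA : Aᵀ = -A) (U : Finset (Fin N)) (hs : 0 < s)
    (p : ENNReal) : MemLp (fun ξ => sideTrace (sampleY A ξ) U s) p (gaussPi N) := by
  refine .of_bound ?_ (N / s) (ae_of_all _ fun ξ => ?_)
  · exact (continuous_finsetSum U fun i _ =>
      continuous_shiftInv_sampleY hA hs i i).aestronglyMeasurable
  · have hskew := sampleY_transpose hA ξ
    have hle := sideTrace_le hskew U hs
    rw [Fintype.card_fin] at hle
    rwa [Real.norm_of_nonneg (sideTrace_nonneg hskew U hs)]

lemma integrable_sideTrace_sampleY (hA : Aᵀ = -A) (U : Finset (Fin N)) (hs : 0 < s) :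
    Integrable (fun ξ => sideTrace (sampleY A ξ) U s) (gaussPi N) :=
  memLp_one_iff_integrable.1 (memLp_sideTrace_sampleY hA U hs 1)

lemma IsBipartiteSkew.one_sub_mul_integral_shiftInv (h : IsBipartiteSkew A U) (hs : 0 < s)
    {i : Fin N} (hi : i ∈ U) :
    1 - s * ∫ ξ, shiftInv (sampleY A ξ) s i i ∂gaussPi N =
      ∑ j ∈ Uᶜ, ∫ ξ, A i j ^ 2 * (shiftInv (sampleY A ξ) s i i * shiftInv (sampleY A ξ) s j j -
        shiftInv (sampleY A ξ) s j i ^ 2) ∂gaussPi N := by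
  have hA := h.transpose_eq
  have hne : ∀ j ∈ Uᶜ, i ≠ j := fun j hj hij => Finset.mem_compl.1 hj (hij ▸ hi)
  calc 1 - s * ∫ ξ, shiftInv (sampleY A ξ) s i i ∂gaussPi N
      = ∫ ξ, (1 - s * shiftInv (sampleY A ξ) s i i) ∂gaussPi N := by
        rw [integral_sub (integrable_const _) ((integrable_shiftInv_sampleY hA hs i i).const_mul s),
          integral_const_mul, integral_const, probReal_univ, one_smul]
    _ = ∫ ξ, ∑ j ∈ Uᶜ, sampleY A ξ i j * shiftInv (sampleY A ξ) s j i ∂gaussPi N := by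
        simp only [(isBipartiteSkew_sampleY h _).sum_compl_mul_shiftInv hs hi]
    _ = ∑ j ∈ Uᶜ, ∫ ξ, sampleY A ξ i j * shiftInv (sampleY A ξ) s j i ∂gaussPi N :=
        integral_finsetSum _ fun j hj => integrable_sampleY_mul_shiftInv hA hs (hne j hj)
    _ = _ := Finset.sum_congr rfl fun j hj => integral_sampleY_mul_shiftInv hA hs (hne j hj)

lemma IsBipartiteSkew.card_sub_mul_integral_sideTrace (h : IsBipartiteSkew A U) (hs : 0 < s) :
    (U.card : ℝ) - s * ∫ ξ, sideTrace (sampleY A ξ) U s ∂gaussPi N =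
      ∫ ξ, ∑ i ∈ U, ∑ j ∈ Uᶜ, A i j ^ 2 *
        (shiftInv (sampleY A ξ) s i i * shiftInv (sampleY A ξ) s j j -
          shiftInv (sampleY A ξ) s j i ^ 2) ∂gaussPi N := by
  have hA := h.transpose_eq
  have hminor := fun i j => integrable_mul_minor_shiftInv hA hs (A i j ^ 2) i j
  rw [integral_finsetSum _ fun i _ => integrable_finsetSum _ fun j _ => hminor i j]
  simp only [sideTrace]
  rw [integral_finsetSum _ fun i _ => integrable_shiftInv_sampleY hA hs i i, Finset.mul_sum,
    Finset.card_eq_sum_ones, Nat.cast_sum, ← Finset.sum_sub_distrib]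
  refine Finset.sum_congr rfl fun i hi => ?_
  rw [integral_finsetSum _ fun j _ => hminor i j, Nat.cast_one,
    h.one_sub_mul_integral_shiftInv hs hi]

lemma sq_integral_le_integral_sq {Ω : Type*} [MeasurableSpace Ω] {μ : Measure Ω}
    [IsProbabilityMeasure μ] {X : Ω → ℝ} (hX : MemLp X 2 μ) :
    (∫ ω, X ω ∂μ) ^ 2 ≤ ∫ ω, X ω ^ 2 ∂μ := by
  have hvar := variance_nonneg X μ
  rw [variance_eq_sub hX] at hvar
  exact sub_nonneg.1 hvar

variable {a b : ℝ}

lemma IsBipartiteWeighting.sq_integral_sideTrace_le (h : IsBipartiteWeighting A U b a)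
    (hs : 0 < s) :
    b ^ 2 * (∫ ξ, sideTrace (sampleY A ξ) U s ∂gaussPi N) ^ 2 ≤ N * (1 + a ^ 2 / s ^ 2) := by
  have hA := h.transpose_eq
  have hT := memLp_sideTrace_sampleY hA U hs 2
  have hpointwise : ∀ ξ, b ^ 2 * sideTrace (sampleY A ξ) U s ^ 2 - a ^ 2 * (N / s ^ 2) ≤
      ∑ i ∈ U, ∑ j ∈ Uᶜ, A i j ^ 2 *
        (shiftInv (sampleY A ξ) s i i * shiftInv (sampleY A ξ) s j j -
          shiftInv (sampleY A ξ) s j i ^ 2) := fun ξ => by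
    have hskew := isBipartiteSkew_sampleY h.toIsBipartiteSkew ξ
    have hlower := hskew.mul_sideTrace_sq_le hs h.card_le_card_compl (sq_nonneg b)
      h.sq_le_sq_apply
    have hupper := sum_mul_shiftInv_sq_le hskew.transpose_eq hs U Uᶜ (sq_nonneg a)
      fun i _ j _ => h.sq_apply_le_sq i j
    rw [Fintype.card_fin] at hupper
    simp only [mul_sub, Finset.sum_sub_distrib]
    linarith
  have hintegral : b ^ 2 * ∫ ξ, sideTrace (sampleY A ξ) U s ^ 2 ∂gaussPi N - a ^ 2 * (N / s ^ 2) ≤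
      U.card - s * ∫ ξ, sideTrace (sampleY A ξ) U s ∂gaussPi N := by
    have hleft := hT.integrable_sq.const_mul (b ^ 2)
    have hmono := integral_mono (hleft.sub (integrable_const (a ^ 2 * (N / s ^ 2))))
      (integrable_finsetSum _ fun i _ => integrable_finsetSum _ fun j _ =>
        integrable_mul_minor_shiftInv hA hs (A i j ^ 2) i j) hpointwise
    rwa [← h.toIsBipartiteSkew.card_sub_mul_integral_sideTrace hs,
      integral_sub' hleft (integrable_const _), integral_const_mul, integral_const,
      probReal_univ, one_smul] at hmono
  have hcard : (U.card : ℝ) ≤ N := by exact_mod_cast card_finset_fin_le U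
  have hmean : 0 ≤ ∫ ξ, sideTrace (sampleY A ξ) U s ∂gaussPi N :=
    integral_nonneg fun ξ => sideTrace_nonneg (sampleY_transpose hA ξ) U hs
  have hjensen := mul_le_mul_of_nonneg_left (sq_integral_le_integral_sq hT) (sq_nonneg b)
  calc _ ≤ N + a ^ 2 * (N / s ^ 2) := by linarith [mul_nonneg hs.le hmean]
    _ = _ := by ring

end ExpectedSideTrace

section ShiftComparison
variable {N : ℕ} {A : Matrix (Fin N) (Fin N) ℝ} {U : Finset (Fin N)} {a b s s' : ℝ}

lemma hasDerivAt_integral_logDetShift_sampleY (hA : Aᵀ = -A) (hs : 0 < s)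
    (hint : Integrable (fun ξ => logDetShift (sampleY A ξ) s) (gaussPi N)) :
    HasDerivAt (fun v => ∫ ξ, logDetShift (sampleY A ξ) v ∂gaussPi N)
      (∫ ξ, (shiftInv (sampleY A ξ) s).trace ∂gaussPi N) s := by
  have hpos : ∀ v ∈ Set.Ioi (s / 2), 0 < v := fun v hv => (half_pos hs).trans hv
  have hnhds := Ioi_mem_nhds (half_lt_self hs)
  have htrace : Continuous fun ξ => (shiftInv (sampleY A ξ) s).trace :=
    continuous_finsetSum _ fun i _ => continuous_shiftInv_sampleY hA hs i i
  refine (hasDerivAt_integral_of_dominated_loc_of_deriv_le (s := Set.Ioi (s / 2))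
    (bound := fun _ => N / (s / 2)) (F' := fun v ξ => (shiftInv (sampleY A ξ) v).trace)
    hnhds ?_ hint htrace.aestronglyMeasurable ?_ (integrable_const _) ?_).2
  · filter_upwards [hnhds] with v hv
    exact (contDiff_logDetShift_sampleY hA (hpos v hv)
      (k := 0)).continuous.aestronglyMeasurable
  · refine ae_of_all _ fun ξ v hv => ?_
    have hskew := sampleY_transpose hA ξ
    have hle := trace_shiftInv_le hskew (hpos v hv)
    rw [Fintype.card_fin] at hle
    rw [Real.norm_of_nonneg (trace_shiftInv_nonneg hskew (hpos v hv))]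
    exact hle.trans (div_le_div_of_nonneg_left N.cast_nonneg (half_pos hs) (le_of_lt hv))
  · exact ae_of_all _ fun ξ v hv =>
      hasDerivAt_logDetShift (sampleY_transpose hA ξ) (hpos v hv)

namespace IsBipartiteWeighting

lemma integral_trace_shiftInv (h : IsBipartiteWeighting A U b a) (hs : 0 < s) :
    ∫ ξ, (shiftInv (sampleY A ξ) s).trace ∂gaussPi N =
      2 * ∫ ξ, sideTrace (sampleY A ξ) U s ∂gaussPi N + ((Uᶜ.card : ℝ) - U.card) / s := by
  have hside := (integrable_sideTrace_sampleY h.transpose_eq U hs).const_mul 2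
  simp only [(isBipartiteSkew_sampleY h.toIsBipartiteSkew _).trace_shiftInv hs]
  rw [integral_add hside (integrable_const _), integral_const_mul, integral_const,
    probReal_univ, one_smul]

lemma integral_sideTrace_le (h : IsBipartiteWeighting A U b a) (hb : 0 < b) (hs : 0 < s)
    (hss' : s ≤ s') :
    ∫ ξ, sideTrace (sampleY A ξ) U s' ∂gaussPi N ≤ √(N * (1 + a ^ 2 / s ^ 2) / b ^ 2) := by
  refine Real.le_sqrt_of_sq_le ?_
  rw [le_div_iff₀' (by positivity)]
  refine (h.sq_integral_sideTrace_le (hs.trans_le hss')).trans ?_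
  gcongr

lemma integral_logDetShift_sub_le (h : IsBipartiteWeighting A U b a) (hb : 0 < b) (hs : 0 < s)
    (hss' : s ≤ s') :
    (∫ ξ, logDetShift (sampleY A ξ) s' ∂gaussPi N - ((Uᶜ.card : ℝ) - U.card) * Real.log s') -
        (∫ ξ, logDetShift (sampleY A ξ) s ∂gaussPi N - ((Uᶜ.card : ℝ) - U.card) * Real.log s) ≤
      2 * √(N * (1 + a ^ 2 / s ^ 2) / b ^ 2) * (s' - s) := by
  have hpos : ∀ v ∈ Set.Ici s, 0 < v := fun v hv => hs.trans_le hv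
  have hderiv : ∀ v ∈ Set.Ici s, HasDerivAt
      (fun v => ∫ ξ, logDetShift (sampleY A ξ) v ∂gaussPi N -
        ((Uᶜ.card : ℝ) - U.card) * Real.log v)
      (2 * ∫ ξ, sideTrace (sampleY A ξ) U v ∂gaussPi N) v := fun v hv => by
    have hint := (integral_exp_logDetShift_le h.transpose_eq h.sq_apply_le_sq (hpos v hv)).1
    refine ((hasDerivAt_integral_logDetShift_sampleY h.transpose_eq (hpos v hv) hint).sub
      ((Real.hasDerivAt_log (hpos v hv).ne').const_mul _)).congr_deriv ?_
    rw [h.integral_trace_shiftInv (hpos v hv)]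
    ring
  refine (convex_Ici s).image_sub_le_mul_sub_of_deriv_le
    (fun v hv => (hderiv v hv).continuousAt.continuousWithinAt)
    (fun v hv => (hderiv v (interior_subset hv)).differentiableAt.differentiableWithinAt)
    (fun v hv => ?_) s Set.self_mem_Ici s' hss' hss'
  rw [(hderiv v (interior_subset hv)).deriv]
  exact mul_le_mul_of_nonneg_left (h.integral_sideTrace_le hb hs (interior_subset hv)) zero_le_two

end IsBipartiteWeighting

end ShiftComparison

/-! ### Matchings and involutions -/

section Matchings
variable {ι : Type*} [LinearOrder ι]

/-- A matching, each edge being recorded as an increasing pair. -/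
def IsOrderedMatching (M : Finset (ι × ι)) : Prop :=
  (∀ p ∈ M, p.1 < p.2) ∧
    ∀ p ∈ M, ∀ q ∈ M, p ≠ q → p.1 ≠ q.1 ∧ p.1 ≠ q.2 ∧ p.2 ≠ q.1 ∧ p.2 ≠ q.2

variable [Fintype ι]

/-- The increasing pairs `(i, σ i)`. Restricted to involutions, `σ ↦ swappedPairs σ` is the
correspondence with matchings. -/
def swappedPairs (σ : Equiv.Perm ι) : Finset (ι × ι) :=
  Finset.univ.filter fun p => p.1 < p.2 ∧ σ p.1 = p.2

variable {σ τ : Equiv.Perm ι}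

lemma mem_swappedPairs {p : ι × ι} : p ∈ swappedPairs σ ↔ p.1 < p.2 ∧ σ p.1 = p.2 := by
  rw [swappedPairs, Finset.mem_filter_univ]

lemma isOrderedMatching_swappedPairs (hσ : Function.Involutive σ) :
    IsOrderedMatching (swappedPairs σ) := by
  refine ⟨fun p hp => (mem_swappedPairs.1 hp).1, ?_⟩
  rintro ⟨i, j⟩ hp ⟨k, l⟩ hq hne
  obtain ⟨hij, hj : σ i = j⟩ := mem_swappedPairs.1 hp
  obtain ⟨hkl, hl : σ k = l⟩ := mem_swappedPairs.1 hq
  have hi := hσ i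
  have hk := hσ k
  grind

lemma apply_eq_of_swappedPairs_subset (hσ : Function.Involutive σ) (hτ : Function.Involutive τ)
    (h : swappedPairs σ ⊆ swappedPairs τ) {i : ι} (hi : σ i ≠ i) : τ i = σ i := by
  rcases hi.lt_or_gt with hlt | hgt
  · have hmem : τ (σ i) = i :=
      (mem_swappedPairs.1 (h (mem_swappedPairs.2 ⟨hlt, hσ i⟩ : (σ i, i) ∈ _))).2
    rw [← hτ (σ i), hmem]
  · exact (mem_swappedPairs.1 (h (mem_swappedPairs.2 ⟨hgt, rfl⟩ : (i, σ i) ∈ _))).2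

lemma injOn_swappedPairs :
    Set.InjOn (swappedPairs (ι := ι)) {σ : Equiv.Perm ι | Function.Involutive σ} := by
  intro σ hσ τ hτ h
  ext i
  by_cases hi : σ i = i
  · by_contra hne
    exact hne (apply_eq_of_swappedPairs_subset hτ hσ h.ge fun hi' => hne (hi.trans hi'.symm))
  · exact (apply_eq_of_swappedPairs_subset hσ hτ h.le hi).symm

lemma IsOrderedMatching.exists_involutive {M : Finset (ι × ι)} (hM : IsOrderedMatching M) :
    ∃ σ : Equiv.Perm ι, Function.Involutive σ ∧ swappedPairs σ = M := by
  classical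
  obtain ⟨hlt, hdisj⟩ := hM
  let partner (i : ι) : ι := if h : ∃ j, (i, j) ∈ M ∨ (j, i) ∈ M then h.choose else i
  have partner_mem : ∀ i, partner i ≠ i → (i, partner i) ∈ M ∨ (partner i, i) ∈ M := fun i hi => by
    by_cases h : ∃ j, (i, j) ∈ M ∨ (j, i) ∈ M
    · simpa only [partner, dif_pos h] using h.choose_spec
    · exact absurd (dif_neg h) hi
  have partner_eq : ∀ i j, (i, j) ∈ M ∨ (j, i) ∈ M → partner i = j := fun i j hij => by
    have h : ∃ j, (i, j) ∈ M ∨ (j, i) ∈ M := ⟨j, hij⟩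
    have hspec := h.choose_spec
    simp only [partner, dif_pos h]
    grind
  have hinv : Function.Involutive partner := fun i => by
    by_cases hi : partner i = i
    · rw [hi, hi]
    · exact partner_eq _ _ (partner_mem i hi).symm
  refine ⟨hinv.toPerm, hinv, Finset.ext fun p => ?_⟩
  rw [mem_swappedPairs, Function.Involutive.coe_toPerm]
  constructor
  · rintro ⟨hp, hpartner⟩
    rcases partner_mem p.1 (hpartner ▸ hp.ne') with h | h <;> rw [hpartner] at h
    · exact h
    · exact absurd (hlt _ h) hp.not_gt
  · exact fun hp => ⟨hlt p hp, partner_eq _ _ (.inl hp)⟩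

@[to_additive]
lemma prod_eq_prod_fixed_mul_prod_swappedPairs {R : Type*} [CommMonoid R]
    (hσ : Function.Involutive σ) (g : ι → R) :
    ∏ i, g i = (∏ i with σ i = i, g i) * ∏ p ∈ swappedPairs σ, g p.1 * g p.2 := by
  have hlower : ∏ i with i < σ i, g i = ∏ p ∈ swappedPairs σ, g p.1 :=
    Finset.prod_nbij' (fun i => (i, σ i)) Prod.fst (by simp [mem_swappedPairs])
      (by simp +contextual [mem_swappedPairs]) (by simp) (by simp +contextual [mem_swappedPairs])
      (by simp)
  have hupper : ∏ i with σ i < i, g i = ∏ p ∈ swappedPairs σ, g p.2 :=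
    Finset.prod_nbij' (fun i => (σ i, i)) Prod.snd (by simp [mem_swappedPairs, hσ _])
      (fun p hp => by have := hσ p.1; have := mem_swappedPairs.1 hp; simp; grind) (by simp)
      (fun p hp => by have := hσ p.1; have := mem_swappedPairs.1 hp; grind) (by simp)
  rw [Finset.prod_mul_distrib, ← hlower, ← hupper,
    ← Finset.prod_filter_mul_prod_filter_not Finset.univ (fun i => σ i = i),
    ← Finset.prod_filter_mul_prod_filter_not (Finset.univ.filter fun i => ¬σ i = i)
      (fun i => i < σ i), Finset.filter_filter, Finset.filter_filter]
  congr 3 <;> ext i <;> grind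

lemma card_fixed_add_two_mul_card_swappedPairs (hσ : Function.Involutive σ) :
    (Finset.univ.filter fun i => σ i = i).card + 2 * (swappedPairs σ).card = Fintype.card ι := by
  have h := sum_eq_sum_fixed_add_sum_swappedPairs hσ fun _ => 1
  simp only [Finset.sum_const, smul_eq_mul, mul_one] at h
  rw [← Finset.card_univ, h]
  ring

lemma sign_eq_neg_one_pow_card_swappedPairs (hσ : Function.Involutive σ) :
    Equiv.Perm.sign σ = (-1) ^ (swappedPairs σ).card := by
  have hcard := card_fixed_add_two_mul_card_swappedPairs hσ
  have hfixed : Fintype.card (Function.fixedPoints σ) =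
      (Finset.univ.filter fun i => σ i = i).card := Fintype.card_subtype _
  rw [Equiv.Perm.sign_of_pow_two_eq_one (Equiv.ext hσ), hfixed]
  congr 1
  lia

lemma sign_mul_prod_apply_eq {R : Type*} [CommRing R] (hσ : Function.Involutive σ)
    {Z : Matrix ι ι R} {s : R} (hdiag : ∀ i, Z i i = s) (hskew : ∀ i j, i ≠ j → Z j i = -Z i j) :
    ((Equiv.Perm.sign σ : ℤ) : R) * ∏ i, Z (σ i) i =
      s ^ (Fintype.card ι - 2 * (swappedPairs σ).card) *
        ∏ p ∈ swappedPairs σ, Z p.1 p.2 ^ 2 := by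
  have hfixed : ∏ i with σ i = i, Z (σ i) i =
      s ^ (Fintype.card ι - 2 * (swappedPairs σ).card) := by
    rw [← card_fixed_add_two_mul_card_swappedPairs hσ, Nat.add_sub_cancel]
    refine Finset.prod_eq_pow_card fun i hi => ?_
    rw [(Finset.mem_filter.1 hi).2, hdiag]
  have hswapped : ∏ p ∈ swappedPairs σ, Z (σ p.1) p.1 * Z (σ p.2) p.2 =
      (-1) ^ (swappedPairs σ).card * ∏ p ∈ swappedPairs σ, Z p.1 p.2 ^ 2 := by
    rw [← Finset.prod_const, ← Finset.prod_mul_distrib]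
    refine Finset.prod_congr rfl fun p hp => ?_
    obtain ⟨hlt, hp⟩ := mem_swappedPairs.1 hp
    rw [← hp, hσ, hskew _ _ (hlt.ne.trans_eq hp.symm)]
    ring
  rw [prod_eq_prod_fixed_mul_prod_swappedPairs hσ, hfixed, hswapped,
    sign_eq_neg_one_pow_card_swappedPairs hσ]
  push_cast
  rw [mul_left_comm, ← mul_assoc ((-1) ^ _), ← mul_pow, neg_one_mul, neg_neg, one_pow, one_mul]

end Matchings

/-! ### The Godsil–Gutman identity -/

section GodsilGutman
variable {N : ℕ} {A : Matrix (Fin N) (Fin N) ℝ}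

lemma memLp_smul_one_add_sampleY_apply (A : Matrix (Fin N) (Fin N) ℝ) (s : ℝ) (i j : Fin N)
    {q : ENNReal} (hq : q ≠ ⊤) :
    MemLp (fun ξ => (s • (1 : Matrix (Fin N) (Fin N) ℝ) + sampleY A ξ) i j) q (gaussPi N) := by
  refine MemLp.add (memLp_const ((s • (1 : Matrix (Fin N) (Fin N) ℝ)) i j)) ?_
  rcases eq_or_ne i j with rfl | h
  · simp only [sampleY_apply_self]
    exact memLp_const 0
  · simp only [sampleY_apply A _ h]
    exact ((IsGaussian.memLp_id (gaussPi N) q hq).eval _).const_mul _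

lemma integrable_leibniz_term (A : Matrix (Fin N) (Fin N) ℝ) (s : ℝ) (σ : Equiv.Perm (Fin N)) :
    Integrable (fun ξ => ∏ i, (s • (1 : Matrix (Fin N) (Fin N) ℝ) + sampleY A ξ) (σ i) i)
      (gaussPi N) := by
  rcases eq_or_ne N 0 with rfl | hN
  · simp
  have hexponent : (∑ _i : Fin N, (N : ENNReal)⁻¹)⁻¹ = 1 := by
    rw [Finset.sum_const, Finset.card_fin, nsmul_eq_mul,
      ENNReal.mul_inv_cancel (by exact_mod_cast hN) (ENNReal.natCast_ne_top N), inv_one]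
  have hprod := MemLp.prod' (s := Finset.univ) (p := fun _ => (N : ENNReal)) fun i _ =>
    memLp_smul_one_add_sampleY_apply A s (σ i) i (ENNReal.natCast_ne_top N)
  exact memLp_one_iff_integrable.1 (hexponent ▸ hprod)

lemma integral_pi_eq_zero_of_update {ι : Type*} [Fintype ι] [DecidableEq ι] {μ : ι → Measure ℝ}
    [∀ i, IsProbabilityMeasure (μ i)] (p : ι) (hp : ∫ y, y ∂μ p = 0) {F : (ι → ℝ) → ℝ}
    (hint : Integrable F (Measure.pi μ))
    (hF : ∀ x y, F (Function.update x p y) = y * F (Function.update x p 1)) :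
    ∫ x, F x ∂Measure.pi μ = 0 := by
  rw [integral_pi_eq_integral_update μ p hint]
  have hinner : ∀ x, ∫ y, F (Function.update x p y) ∂μ p = 0 := fun x => by
    rw [integral_congr_ae (ae_of_all _ (hF x)), integral_mul_const, hp, zero_mul]
  simp only [hinner, integral_zero]

/-- Along a cycle of length at least three some Gaussian variable occurs exactly once. -/
lemma integral_leibniz_term_eq_zero (A : Matrix (Fin N) (Fin N) ℝ) (s : ℝ)
    {σ : Equiv.Perm (Fin N)} (hσ : ¬Function.Involutive σ) :
    ∫ ξ, ∏ i, (s • (1 : Matrix (Fin N) (Fin N) ℝ) + sampleY A ξ) (σ i) i ∂gaussPi N = 0 := by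
  obtain ⟨x, hx⟩ := not_forall.1 hσ
  have hne : σ x ≠ x := fun h => hx (by rw [h, h])
  refine integral_pi_eq_zero_of_update (slot (σ x) x hne) integral_id_gaussianReal
    (integrable_leibniz_term A s σ) fun ξ y => ?_
  rw [← Finset.mul_prod_erase _ _ (Finset.mem_univ x),
    ← Finset.mul_prod_erase _ (fun i => (s • 1 + sampleY A (Function.update ξ _ 1)) (σ i) i)
      (Finset.mem_univ x), ← mul_assoc]
  congr 1
  · rw [Matrix.add_apply, Matrix.add_apply, sampleY_apply A _ hne, sampleY_apply A _ hne,
      Function.update_self, Function.update_self, Matrix.smul_apply, one_apply_ne hne]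
    ring
  refine Finset.prod_congr rfl fun i hi => ?_
  rw [Matrix.add_apply, Matrix.add_apply]
  rcases eq_or_ne (σ i) i with h | h
  · rw [h, sampleY_apply_self, sampleY_apply_self]
  · have hslot : slot (σ i) i h ≠ slot (σ x) x hne := by
      rw [Ne, slot_eq_slot_iff]
      rintro (⟨-, hix⟩ | ⟨hix, rfl⟩)
      · exact Finset.ne_of_mem_erase hi hix
      · exact hx hix
    rw [sampleY_apply A _ h, sampleY_apply A _ h, Function.update_of_ne hslot,
      Function.update_of_ne hslot]

lemma integral_sq_gaussianReal : ∫ x, x ^ 2 ∂gaussianReal 0 1 = 1 := by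
  have h := variance_eq_sub (memLp_id_gaussianReal (μ := 0) (v := 1) 2)
  have hmean : ∫ x, id x ∂gaussianReal 0 1 = 0 := integral_id_gaussianReal
  rw [variance_id_gaussianReal, hmean] at h
  simpa using h.symm

lemma prod_eq_prod_pairIdx {M : Finset (Fin N × Fin N)} (hM : ∀ p ∈ M, p.1 < p.2)
    (f : Fin N × Fin N → ℝ) : ∏ p ∈ M, f p = ∏ q : PairIdx N, if q.1 ∈ M then f q.1 else 1 := by
  rw [← Finset.prod_subtype (Finset.univ.filter fun p : Fin N × Fin N => p.1 < p.2) (by simp)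
      fun p => if p ∈ M then f p else 1, Finset.prod_ite_mem, Finset.inter_eq_right.2]
  exact fun p hp => by simpa using hM p hp

lemma integral_prod_sq_sampleY (A : Matrix (Fin N) (Fin N) ℝ) {M : Finset (Fin N × Fin N)}
    (hM : ∀ p ∈ M, p.1 < p.2) :
    ∫ ξ, ∏ p ∈ M, sampleY A ξ p.1 p.2 ^ 2 ∂gaussPi N = ∏ p ∈ M, A p.1 p.2 ^ 2 := by
  have hfactor : ∀ (ξ : PairIdx N → ℝ) (q : PairIdx N),
      sampleY A ξ q.1.1 q.1.2 ^ 2 = A q.1.1 q.1.2 ^ 2 * ξ q ^ 2 := fun ξ q => by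
    rw [sampleY_apply A ξ q.2.ne, slot_of_lt q.2, mul_pow]
  simp only [prod_eq_prod_pairIdx hM, hfactor]
  refine (integral_fintype_prod_eq_prod (𝕜 := ℝ)
    fun (q : PairIdx N) y => if q.1 ∈ M then A q.1.1 q.1.2 ^ 2 * y ^ 2 else 1).trans ?_
  refine Finset.prod_congr rfl fun q _ => ?_
  split_ifs
  · rw [integral_const_mul, integral_sq_gaussianReal, mul_one]
  · rw [integral_const, probReal_univ, one_smul]

lemma integral_leibniz_term_of_involutive (hA : Aᵀ = -A) (s : ℝ) {σ : Equiv.Perm (Fin N)}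
    (hσ : Function.Involutive σ) :
    ∫ ξ, ((Equiv.Perm.sign σ : ℤ) : ℝ) *
        ∏ i, (s • (1 : Matrix (Fin N) (Fin N) ℝ) + sampleY A ξ) (σ i) i ∂gaussPi N =
      s ^ (N - 2 * (swappedPairs σ).card) * ∏ p ∈ swappedPairs σ, A p.1 p.2 ^ 2 := by
  have hlt : ∀ p ∈ swappedPairs σ, p.1 < p.2 := fun p hp => (mem_swappedPairs.1 hp).1
  have hoff : ∀ ξ {i j : Fin N}, i ≠ j →
      (s • (1 : Matrix (Fin N) (Fin N) ℝ) + sampleY A ξ) i j = sampleY A ξ i j :=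
    fun ξ i j h => by rw [Matrix.add_apply, Matrix.smul_apply, one_apply_ne h, smul_zero, zero_add]
  rw [← integral_prod_sq_sampleY A hlt, ← integral_const_mul]
  congr with ξ
  rw [sign_mul_prod_apply_eq hσ (s := s), Fintype.card_fin]
  · exact congrArg _ (Finset.prod_congr rfl fun p hp => by rw [hoff ξ (hlt p hp).ne])
  · intro i
    rw [Matrix.add_apply, sampleY_apply_self, Matrix.smul_apply, one_apply_eq, smul_eq_mul,
      mul_one, add_zero]
  · intro i j h
    rw [hoff ξ h, hoff ξ h.symm]
    exact congrFun₂ (sampleY_transpose hA ξ) i j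

open Classical in
lemma integral_det_eq_sum_matchings (hA : Aᵀ = -A) (s : ℝ) :
    ∫ ξ, (s • (1 : Matrix (Fin N) (Fin N) ℝ) + sampleY A ξ).det ∂gaussPi N =
      ∑ M : Finset (Fin N × Fin N) with IsOrderedMatching M,
        s ^ (N - 2 * M.card) * ∏ p ∈ M, A p.1 p.2 ^ 2 := by
  simp only [det_apply']
  rw [integral_finsetSum _ fun σ _ => (integrable_leibniz_term A s σ).const_mul _,
    ← Finset.sum_filter_of_ne (p := fun σ : Equiv.Perm (Fin N) => Function.Involutive σ)]
  · refine Finset.sum_nbij swappedPairs ?_ ?_ ?_ ?_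
    · exact fun σ hσ => (Finset.mem_filter_univ _).2
        (isOrderedMatching_swappedPairs (Finset.mem_filter.1 hσ).2)
    · simpa using injOn_swappedPairs
    · intro M hM
      simpa using (Finset.mem_filter_univ _ |>.1 hM).exists_involutive
    · exact fun σ hσ => integral_leibniz_term_of_involutive hA s (Finset.mem_filter.1 hσ).2
  · intro σ _ hne
    contrapose! hne
    rw [integral_const_mul, integral_leibniz_term_eq_zero A s hne, mul_zero]

lemma IsOrderedMatching.two_mul_card_le {M : Finset (Fin N × Fin N)} (hM : IsOrderedMatching M) :
    2 * M.card ≤ N := by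
  obtain ⟨σ, hσ, rfl⟩ := hM.exists_involutive
  have hcard := card_fixed_add_two_mul_card_swappedPairs hσ
  rw [Fintype.card_fin] at hcard
  lia

open Classical in
lemma PhiFull_eq_sum_matchings (A : Matrix (Fin N) (Fin N) ℝ) {t : ℝ} (ht : 0 ≤ t) :
    PhiFull A t = ∑ M : Finset (Fin N × Fin N) with IsOrderedMatching M,
      √t ^ (N - 2 * M.card) * ∏ p ∈ M, A p.1 p.2 ^ 2 := by
  have hpow : ∀ k ∈ Finset.range (N / 2 + 1),
      (if Even N then 1 else √t) * t ^ (N / 2 - k) = √t ^ (N - 2 * k) := fun k hk => by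
    have hk : k < N / 2 + 1 := Finset.mem_range.1 hk
    conv_lhs => rw [← Real.sq_sqrt ht, ← pow_mul, Real.sq_sqrt ht]
    split_ifs with hN
    · rw [one_mul]
      congr 1
      grind
    · rw [← pow_succ']
      congr 1
      grind
  rw [PhiFull, PhiW, Finset.mul_sum, ← Finset.sum_fiberwise_of_maps_to
    (g := Finset.card) (t := Finset.range (N / 2 + 1)) fun M hM => ?_]
  · refine Finset.sum_congr rfl fun k hk => ?_
    rw [mul_left_comm, hpow k hk, phiW, Finset.sum_mul, Finset.filter_filter]
    refine Finset.sum_congr (by ext; simp [IsOrderedMatching]) fun M hM => ?_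
    rw [(Finset.mem_filter.1 hM).2.2, mul_comm]
  · have hcard := (Finset.mem_filter_univ _ |>.1 hM : IsOrderedMatching M).two_mul_card_le
    exact Finset.mem_range.2 (by lia)

/-- The **Godsil–Gutman identity**. -/
lemma PhiFull_eq_integral_det (hA : Aᵀ = -A) {t : ℝ} (ht : 0 ≤ t) :
    PhiFull A t = ∫ ξ, (√t • (1 : Matrix (Fin N) (Fin N) ℝ) + sampleY A ξ).det ∂gaussPi N := by
  rw [PhiFull_eq_sum_matchings A ht, integral_det_eq_sum_matchings hA]

lemma PhiFull_pos (A : Matrix (Fin N) (Fin N) ℝ) {t : ℝ} (ht : 0 < t) : 0 < PhiFull A t := by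
  classical
  have hterm : ∀ M : Finset (Fin N × Fin N),
      0 ≤ √t ^ (N - 2 * M.card) * ∏ p ∈ M, A p.1 p.2 ^ 2 := fun M =>
    mul_nonneg (pow_nonneg (Real.sqrt_nonneg t) _) (Finset.prod_nonneg fun _ _ => sq_nonneg _)
  rw [PhiFull_eq_sum_matchings A ht.le]
  refine Finset.sum_pos' (fun M _ => hterm M) ⟨∅, ?_, ?_⟩
  · simp [IsOrderedMatching]
  · simpa using pow_pos (Real.sqrt_pos.2 ht) N

end GodsilGutman

/-! ### The logarithmic gap -/

section LogGap
variable {N : ℕ} {A : Matrix (Fin N) (Fin N) ℝ} {U : Finset (Fin N)} {a b t s' : ℝ}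

lemma PhiFull_le_integral_exp_logDetShift (hA : Aᵀ = -A) (ht : 0 < t) :
    PhiFull A t ≤ ∫ ξ, Real.exp (logDetShift (sampleY A ξ) √t) ∂gaussPi N := by
  rw [PhiFull_eq_integral_det hA ht.le]
  simp only [exp_logDetShift (sampleY_transpose hA _) (Real.sqrt_pos.2 ht)]
  exact (le_abs_self _).trans abs_integral_le_integral_abs

namespace IsBipartiteWeighting

lemma log_PhiFull_le (h : IsBipartiteWeighting A U b a) (ht : 0 < t) (hts' : √t ≤ s') :
    Real.log (PhiFull A t) ≤
      ∫ ξ, logDetShift (sampleY A ξ) s' ∂gaussPi N - ((Uᶜ.card : ℝ) - U.card) * Real.log s' +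
        ((Uᶜ.card : ℝ) - U.card) * Real.log √t + Real.pi ^ 2 * (2 * a ^ 2 * (N / s' ^ 2)) / 8 := by
  have hs : 0 < √t := Real.sqrt_pos.2 ht
  have hs' : 0 < s' := hs.trans_le hts'
  set d : ℝ := (Uᶜ.card : ℝ) - U.card
  obtain ⟨-, hexp, -⟩ := integral_exp_logDetShift_le h.transpose_eq h.sq_apply_le_sq hs
  obtain ⟨-, hexp', hconc⟩ := integral_exp_logDetShift_le h.transpose_eq h.sq_apply_le_sq hs'
  have hmono : ∀ ξ, Real.exp (logDetShift (sampleY A ξ) √t) ≤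
      Real.exp (d * Real.log √t - d * Real.log s') *
        Real.exp (logDetShift (sampleY A ξ) s') := fun ξ => by
    have hle : logDetShift (sampleY A ξ) √t - d * Real.log √t ≤
        logDetShift (sampleY A ξ) s' - d * Real.log s' :=
      (isBipartiteSkew_sampleY h.toIsBipartiteSkew ξ).monotoneOn_logDetShift_sub hs hs' hts'
    rw [← Real.exp_add, Real.exp_le_exp]
    linarith
  rw [Real.log_le_iff_le_exp (PhiFull_pos A ht)]
  calc PhiFull A t
      ≤ ∫ ξ, Real.exp (logDetShift (sampleY A ξ) √t) ∂gaussPi N :=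
        PhiFull_le_integral_exp_logDetShift h.transpose_eq ht
    _ ≤ Real.exp (d * Real.log √t - d * Real.log s') *
          ∫ ξ, Real.exp (logDetShift (sampleY A ξ) s') ∂gaussPi N := by
        rw [← integral_const_mul]
        exact integral_mono hexp (hexp'.const_mul _) hmono
    _ ≤ Real.exp (d * Real.log √t - d * Real.log s') * _ :=
        mul_le_mul_of_nonneg_left hconc (Real.exp_pos _).le
    _ = _ := by
        rw [← Real.exp_add]
        ring_nf

theorem log_PhiFull_sub_logPhiTilde_le (h : IsBipartiteWeighting A U b a) (hb : 0 < b)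
    (ht : 0 < t) (hts' : √t ≤ s') :
    Real.log (PhiFull A t) - logPhiTilde t A ≤
      Real.pi ^ 2 * a ^ 2 / 4 * N / s' ^ 2 + 2 * √(N * ((1 + a ^ 2 / t) / b ^ 2)) * s' := by
  have hs : 0 < √t := Real.sqrt_pos.2 ht
  have hlog := h.log_PhiFull_le ht hts'
  have hshift := h.integral_logDetShift_sub_le hb hs hts'
  have hroot := mul_nonneg (mul_nonneg zero_le_two
    (Real.sqrt_nonneg (N * (1 + a ^ 2 / t) / b ^ 2))) hs.le
  rw [Real.sq_sqrt ht.le, mul_sub] at hshift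
  change _ - ∫ ξ, logDetShift (sampleY A ξ) √t ∂gaussPi N ≤ _
  have hconst : Real.pi ^ 2 * a ^ 2 / 4 * N / s' ^ 2 =
      Real.pi ^ 2 * (2 * a ^ 2 * (N / s' ^ 2)) / 8 := by ring
  rw [← mul_div_assoc (N : ℝ), hconst]
  linarith

end IsBipartiteWeighting

end LogGap

section CompleteBipartite
variable {m n : ℕ} (w : Fin m → Fin n → ℝ)

lemma bipartiteSkew_castAdd_castAdd (i j : Fin m) :
    bipartiteSkew w (Fin.castAdd n i) (Fin.castAdd n j) = 0 := by
  simp [bipartiteSkew]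

lemma bipartiteSkew_natAdd_natAdd (i j : Fin n) :
    bipartiteSkew w (Fin.natAdd m i) (Fin.natAdd m j) = 0 := by
  simp [bipartiteSkew]

lemma bipartiteSkew_castAdd_natAdd (i : Fin m) (j : Fin n) :
    bipartiteSkew w (Fin.castAdd n i) (Fin.natAdd m j) = √(w i j) := by
  simp [bipartiteSkew]

lemma bipartiteSkew_natAdd_castAdd (i : Fin m) (j : Fin n) :
    bipartiteSkew w (Fin.natAdd m j) (Fin.castAdd n i) = -√(w i j) := by
  simp [bipartiteSkew]

lemma bipartiteSkew_transpose : (bipartiteSkew w)ᵀ = -bipartiteSkew w := by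
  ext i j
  rw [transpose_apply, Matrix.neg_apply]
  induction i using Fin.addCases <;> induction j using Fin.addCases <;>
    simp only [bipartiteSkew_castAdd_castAdd, bipartiteSkew_natAdd_natAdd,
      bipartiteSkew_castAdd_natAdd, bipartiteSkew_natAdd_castAdd, neg_zero, neg_neg]

lemma castAdd_mem_map_castAddEmb (i : Fin m) :
    Fin.castAdd n i ∈ Finset.univ.map (Fin.castAddEmb n) :=
  Finset.mem_map_of_mem _ (Finset.mem_univ i)

lemma natAdd_notMem_map_castAddEmb (j : Fin n) :
    Fin.natAdd m j ∉ Finset.univ.map (Fin.castAddEmb n) := by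
  simp only [Finset.mem_map, Finset.mem_univ, true_and, Fin.castAddEmb_apply, Fin.ext_iff,
    Fin.val_castAdd, Fin.val_natAdd, not_exists]
  lia

lemma isBipartiteSkew_bipartiteSkew :
    IsBipartiteSkew (bipartiteSkew w) (Finset.univ.map (Fin.castAddEmb n)) where
  transpose_eq := bipartiteSkew_transpose w
  apply_eq_zero i j hij := by
    induction i using Fin.addCases <;> induction j using Fin.addCases <;>
      simp_all only [bipartiteSkew_castAdd_castAdd, bipartiteSkew_natAdd_natAdd,
        castAdd_mem_map_castAddEmb, natAdd_notMem_map_castAddEmb, iff_false, not_true, false_iff]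

variable {w} {a b : ℝ}

lemma isBipartiteWeighting_bipartiteSkew (hmn : m ≤ n)
    (hw : ∀ i j, w i j ∈ Set.Icc (b ^ 2) (a ^ 2)) :
    IsBipartiteWeighting (bipartiteSkew w) (Finset.univ.map (Fin.castAddEmb n)) b a where
  toIsBipartiteSkew := isBipartiteSkew_bipartiteSkew w
  sq_le_sq_apply i hi j hj := by
    induction i using Fin.addCases with
    | right i => exact absurd hi (natAdd_notMem_map_castAddEmb i)
    | left i =>
      induction j using Fin.addCases with
      | left j => exact absurd (castAdd_mem_map_castAddEmb j) (Finset.mem_compl.1 hj)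
      | right j =>
        rw [bipartiteSkew_castAdd_natAdd, Real.sq_sqrt ((sq_nonneg b).trans (hw i j).1)]
        exact (hw i j).1
  sq_apply_le_sq i j := by
    have hle : ∀ i j, √(w i j) ^ 2 ≤ a ^ 2 := fun i j => by
      rw [Real.sq_sqrt ((sq_nonneg b).trans (hw i j).1)]
      exact (hw i j).2
    induction i using Fin.addCases <;> induction j using Fin.addCases <;>
      simp only [bipartiteSkew_castAdd_castAdd, bipartiteSkew_natAdd_natAdd,
        bipartiteSkew_castAdd_natAdd, bipartiteSkew_natAdd_castAdd, neg_sq, hle,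
        zero_pow two_ne_zero, sq_nonneg]
  card_le_card_compl := by
    rw [Finset.card_compl, Finset.card_map, Finset.card_univ, Fintype.card_fin, Fintype.card_fin]
    lia

end CompleteBipartite

lemma add_two_mul_sqrt_lt {c C ε δ N n : ℝ} (hC : 0 < C) (hε : 0 < ε) (hδ : δ * C = (ε / 4) ^ 2)
    (hn : 0 < n) (hnN : n ≤ N) (hc : c / (δ * n) < ε / 2) :
    c * N / (δ * n) + 2 * √(N * C) * √(δ * n) < N * ε := by
  have hN : 0 < N := hn.trans_le hnN
  have hroot : √(N * C) * √(δ * n) ≤ N * (ε / 4) := by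
    rw [← Real.sqrt_mul (by positivity)]
    refine Real.sqrt_le_iff.2 ⟨by positivity, ?_⟩
    calc N * C * (δ * n) = N * n * (δ * C) := by ring
      _ ≤ N * N * (δ * C) := by
        rw [hδ]
        gcongr
      _ = (N * (ε / 4)) ^ 2 := by
        rw [hδ]
        ring
  have hconc : c * N / (δ * n) < N * (ε / 2) := by
    rw [mul_div_right_comm, mul_comm]
    exact mul_lt_mul_of_pos_left hc hN
  linarith

/-- for fixed `0 < b ≤ a` and `t > 0`,
`lim_{n→∞} sup_{m ≤ n} sup_{ω : weights in [b²,a²]}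
  (1/(m+n)) (log Φ(t, A(ω)) - log Φ̃(t, A(ω))) = 0`
(the quantity being nonnegative by Jensen's inequality). -/
theorem bipartite_log_gap_tendsto_zero
    (b a : ℝ) (hb : 0 < b) (hba : b ≤ a) (t : ℝ) (ht : 0 < t) :
    ∀ ε : ℝ, 0 < ε → ∃ n₀ : ℕ, ∀ n : ℕ, n₀ ≤ n → ∀ m : ℕ, m ≤ n →
      ∀ w : Fin m → Fin n → ℝ, (∀ i j, w i j ∈ Set.Icc (b ^ 2) (a ^ 2)) →
        (1 / ((m : ℝ) + n)) *
            (Real.log (PhiFull (bipartiteSkew w) t) -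
              logPhiTilde t (bipartiteSkew w)) < ε := by
  intro ε hε
  set C : ℝ := (1 + a ^ 2 / t) / b ^ 2 with hC_def
  have hC : 0 < C := by positivity
  obtain ⟨δ, hδ, hδC⟩ : ∃ δ : ℝ, 0 < δ ∧ δ * C = (ε / 4) ^ 2 :=
    ⟨(ε / 4) ^ 2 / C, by positivity, div_mul_cancel₀ _ hC.ne'⟩
  have hlim : Filter.Tendsto (fun n : ℕ => δ * n) Filter.atTop Filter.atTop :=
    tendsto_natCast_atTop_atTop.const_mul_atTop hδ
  have hconc : ∀ᶠ n : ℕ in Filter.atTop, Real.pi ^ 2 * a ^ 2 / 4 / (δ * n) < ε / 2 :=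
    (tendsto_const_nhds.div_atTop hlim).eventually_lt_const (half_pos hε)
  obtain ⟨n₀, hn₀⟩ := Filter.eventually_atTop.1
    ((hlim.eventually_ge_atTop t).and (hconc.and (Filter.eventually_gt_atTop 0)))
  refine ⟨n₀, fun n hn m hmn w hw => ?_⟩
  obtain ⟨htn, hsmall, hpos⟩ := hn₀ n hn
  have hn' : (0 : ℝ) < n := Nat.cast_pos.2 hpos
  have hgap := (isBipartiteWeighting_bipartiteSkew hmn hw).log_PhiFull_sub_logPhiTilde_le hb ht
    (Real.sqrt_le_sqrt htn)
  rw [Real.sq_sqrt (by positivity), Nat.cast_add, ← hC_def] at hgap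
  rw [one_div, inv_mul_lt_iff₀ (by positivity)]
  exact hgap.trans_lt (add_two_mul_sqrt_lt hC hε hδC hn' (by simp) hsmall)
end
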